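/- arXiv:2402.18739 — 3 statements merged into one kernel-verified Lean document; each statement's English description precedes it below -/
import Mathlib

section
/- Every d-regular finite simple graph with d ≥ 54000 is decomposable into 4 locally irregular subgraphs; that is, its edge set E can be partitioned into 4 sets E_1, E_2, E_3, E_4 such that each spanning subgraph (V, E_i) is locally irregular. -/
/-- The degree of a vertex `v` with respect to a set `E'` of edges:
the number of edges of `E'` incident with `v`. -/
noncomputable def edgeDeg {V : Type*} (E' : Set (Sym2 V)) (v : V) : ℕ :=
  {e ∈ E' | v ∈ e}.ncard

/-- A set of edges `E'` induces a locally irregular (spanning) subgraph: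
any two vertices joined by an edge of `E'` have distinct degrees w.r.t. `E'`. -/
def LocallyIrregular {V : Type*} (E' : Set (Sym2 V)) : Prop :=
  ∀ v w : V, s(v, w) ∈ E' → edgeDeg E' v ≠ edgeDeg E' w


namespace LocIrr

/-- Symmetric Lovász local lemma, counting version. -/
theorem local_lemma {Ω ι : Type*} [Fintype Ω] [Nonempty Ω] [Fintype ι] [DecidableEq ι]
    (A : ι → Ω → Prop) (D : ι → Finset ι) (p : ℝ) (Δ : ℕ)
    (hp0 : 0 ≤ p) (hself : ∀ i, i ∈ D i) (hD : ∀ i, (D i).card ≤ Δ)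
    (hp : 4 * p * Δ ≤ 1)
    (hA : ∀ i, (Nat.card {w // A i w} : ℝ) ≤ p * Nat.card Ω)
    (hind : ∀ i (T : Finset ι), Disjoint T (D i) →
      Nat.card {w // A i w ∧ ∀ j ∈ T, ¬ A j w} * Nat.card Ω
        = Nat.card {w // A i w} * Nat.card {w // ∀ j ∈ T, ¬ A j w}) :
    ∃ w, ∀ i, ¬ A i w := by
  classical
  have hΩ : (0 : ℝ) < Nat.card Ω := by exact_mod_cast Nat.card_pos
  have mono : ∀ P Q : Ω → Prop, (∀ w, P w → Q w) →
      (Nat.card {w // P w} : ℝ) ≤ Nat.card {w // Q w} := by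
    intro P Q h
    exact_mod_cast Nat.card_le_card_of_injective (Subtype.map id h)
      (Subtype.map_injective h Function.injective_id)
  have key0 : ∀ i (T : Finset ι), Disjoint T (D i) →
      (Nat.card {w // A i w ∧ ∀ j ∈ T, ¬ A j w} : ℝ)
        ≤ p * Nat.card {w // ∀ j ∈ T, ¬ A j w} := by
    intro i T h
    have h1 : (Nat.card {w // A i w ∧ ∀ j ∈ T, ¬ A j w} : ℝ) * Nat.card Ω
        = Nat.card {w // A i w} * Nat.card {w // ∀ j ∈ T, ¬ A j w} := by
      exact_mod_cast hind i T h
    have h2 := hA i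
    have h3 : (0 : ℝ) ≤ Nat.card {w // ∀ j ∈ T, ¬ A j w} := by positivity
    have h4 := mul_le_mul_of_nonneg_right h2 h3
    rw [← h1] at h4
    have : (Nat.card {w // A i w ∧ ∀ j ∈ T, ¬ A j w} : ℝ) * Nat.card Ω
      ≤ (p * Nat.card {w // ∀ j ∈ T, ¬ A j w}) * Nat.card Ω := by linarith
    exact le_of_mul_le_mul_right this hΩ
  have key : ∀ n : ℕ, ∀ T : Finset ι, T.card = n → ∀ i,
      (Nat.card {w // A i w ∧ ∀ j ∈ T, ¬ A j w} : ℝ)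
        ≤ 2 * p * Nat.card {w // ∀ j ∈ T, ¬ A j w} := by
    intro n
    induction n using Nat.strong_induction_on with
    | _ n ih =>
      intro T hT i
      by_cases hdis : Disjoint T (D i)
      · refine (key0 i T hdis).trans ?_
        have h3 : (0 : ℝ) ≤ p * Nat.card {w // ∀ j ∈ T, ¬ A j w} := by positivity
        linarith
      · set T2 := T \ D i with hT2
        set T1 := T ∩ D i with hT1
        have hlt : T2.card < n := by
          rw [← hT]
          apply Finset.card_lt_card
          refine ⟨Finset.sdiff_subset, fun h => hdis ?_⟩
          rw [Finset.disjoint_left]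
          intro a ha hb
          have := h ha
          simp [hT2] at this
          exact this.2 hb
        have h1 : (Nat.card {w // A i w ∧ ∀ j ∈ T, ¬ A j w} : ℝ)
            ≤ Nat.card {w // A i w ∧ ∀ j ∈ T2, ¬ A j w} :=
          mono _ _ (fun w hw => ⟨hw.1, fun j hj => hw.2 j (Finset.sdiff_subset hj)⟩)
        have h2 := key0 i T2 Finset.sdiff_disjoint
        have h3 : (Nat.card {w // ∀ j ∈ T2, ¬ A j w} : ℝ)
            ≤ Nat.card {w // ∀ j ∈ T, ¬ A j w}
              + ∑ j ∈ T1, (Nat.card {w // A j w ∧ ∀ k ∈ T2, ¬ A k w} : ℝ) := by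
          have hsub : (Finset.univ.filter fun w => ∀ j ∈ T2, ¬ A j w) ⊆
              (Finset.univ.filter fun w => ∀ j ∈ T, ¬ A j w) ∪
              T1.biUnion (fun j => Finset.univ.filter fun w => A j w ∧ ∀ k ∈ T2, ¬ A k w) := by
            intro w hw
            simp only [Finset.mem_filter, Finset.mem_univ, true_and, Finset.mem_union,
              Finset.mem_biUnion] at hw ⊢
            by_cases h : ∀ j ∈ T, ¬ A j w
            · exact Or.inl h
            · push Not at h
              obtain ⟨j, hj, hjw⟩ := h
              refine Or.inr ⟨j, ?_, hjw, hw⟩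
              by_contra hn
              exact hw j (by simp [hT2, hT1] at hn ⊢; exact ⟨hj, hn hj⟩) hjw
          have hc := (Finset.card_le_card hsub).trans (Finset.card_union_le _ _)
          have hc2 := hc.trans (Nat.add_le_add_left Finset.card_biUnion_le _)
          simp only [Nat.card_eq_fintype_card, Fintype.card_subtype]
          exact_mod_cast hc2
        have h4 : ∑ j ∈ T1, (Nat.card {w // A j w ∧ ∀ k ∈ T2, ¬ A k w} : ℝ)
            ≤ Δ * (2 * p * Nat.card {w // ∀ j ∈ T2, ¬ A j w}) := by
          have hpos : (0:ℝ) ≤ (2 * p * Nat.card {w // ∀ j ∈ T2, ¬ A j w}) := by positivity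
          calc _ ≤ ∑ j ∈ T1, (2 * p * Nat.card {w // ∀ j ∈ T2, ¬ A j w} : ℝ) :=
                Finset.sum_le_sum (fun j _ => ih _ hlt T2 rfl j)
            _ = T1.card * (2 * p * Nat.card {w // ∀ j ∈ T2, ¬ A j w}) := by
                rw [Finset.sum_const, nsmul_eq_mul]
            _ ≤ _ := by
                apply mul_le_mul_of_nonneg_right _ hpos
                exact_mod_cast (Finset.card_le_card Finset.inter_subset_right).trans (hD i)
        have h5 : (0:ℝ) ≤ Nat.card {w // ∀ j ∈ T2, ¬ A j w} := by positivity
        have h6 : (4 * p * Δ) * (Nat.card {w // ∀ j ∈ T2, ¬ A j w} : ℝ)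
            ≤ 1 * Nat.card {w // ∀ j ∈ T2, ¬ A j w} := mul_le_mul_of_nonneg_right hp h5
        have h7 : (Nat.card {w // ∀ j ∈ T2, ¬ A j w} : ℝ)
            ≤ 2 * Nat.card {w // ∀ j ∈ T, ¬ A j w} := by nlinarith
        have h8 := mul_le_mul_of_nonneg_left h7 hp0
        linarith
  have pos : ∀ T : Finset ι, (0:ℝ) < Nat.card {w // ∀ j ∈ T, ¬ A j w} := by
    intro T
    induction T using Finset.induction_on with
    | empty =>
      have : Nonempty {w : Ω // ∀ j ∈ (∅ : Finset ι), ¬ A j w} :=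
        ⟨⟨Classical.arbitrary Ω, by simp⟩⟩
      exact_mod_cast Nat.card_pos
    | insert i T hi ih =>
      have h1 := key _ T rfl i
      have hΔ : (1:ℝ) ≤ Δ := by
        exact_mod_cast (Finset.card_pos.mpr ⟨i, hself i⟩).trans_le (hD i)
      have hp4 : 4 * p ≤ 1 := by nlinarith
      have h2 : (Nat.card {w // ∀ j ∈ T, ¬ A j w} : ℝ)
          ≤ Nat.card {w // ∀ j ∈ insert i T, ¬ A j w}
            + Nat.card {w // A i w ∧ ∀ j ∈ T, ¬ A j w} := by
        have hsub : (Finset.univ.filter fun w => ∀ j ∈ T, ¬ A j w) ⊆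
            (Finset.univ.filter fun w => ∀ j ∈ insert i T, ¬ A j w) ∪
            (Finset.univ.filter fun w => A i w ∧ ∀ k ∈ T, ¬ A k w) := by
          intro w hw
          simp only [Finset.mem_filter, Finset.mem_univ, true_and, Finset.mem_union,
            Finset.forall_mem_insert] at hw ⊢
          tauto
        have hc := (Finset.card_le_card hsub).trans (Finset.card_union_le _ _)
        simp only [Nat.card_eq_fintype_card, Fintype.card_subtype]
        exact_mod_cast hc
      nlinarith
  have := pos Finset.univ
  have h0 : 0 < Nat.card {w // ∀ j ∈ (Finset.univ : Finset ι), ¬ A j w} := by exact_mod_cast this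
  obtain ⟨⟨w, hw⟩⟩ := (Nat.card_pos_iff.mp h0).1
  exact ⟨w, fun i => hw i (Finset.mem_univ i)⟩

/-- Events depending on disjoint sets of coordinates are independent. -/
theorem indep_count {V C : Type*} [Fintype V] [Fintype C] [DecidableEq V]
    (s : Finset V) (A B : (V → C) → Prop)
    (hA : ∀ f g, (∀ u ∈ s, f u = g u) → A f → A g)
    (hB : ∀ f g, (∀ u ∉ s, f u = g u) → B f → B g) :
    Nat.card {f // A f ∧ B f} * Nat.card (V → C) = Nat.card {f // A f} * Nat.card {f // B f} := by
  classical
  rw [← Nat.card_prod, ← Nat.card_prod]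
  let mix : (V → C) → (V → C) → V → C := fun f g u => if u ∈ s then f u else g u
  refine Nat.card_congr
    { toFun := fun x => (⟨mix x.1.1 x.2, hA x.1.1 _ (fun u hu => by simp [mix, hu]) x.1.2.1⟩,
        ⟨mix x.2 x.1.1, hB x.1.1 _ (fun u hu => by simp [mix, hu]) x.1.2.2⟩)
      invFun := fun y => (⟨mix y.1.1 y.2.1,
        hA y.1.1 _ (fun u hu => by simp [mix, hu]) y.1.2,
        hB y.2.1 _ (fun u hu => by simp [mix, hu]) y.2.2⟩, mix y.2.1 y.1.1)
      left_inv := ?_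
      right_inv := ?_ }
  · rintro ⟨⟨f, hf⟩, g⟩
    simp only [Prod.mk.injEq, Subtype.mk.injEq]
    constructor <;> funext u <;> by_cases hu : u ∈ s <;> simp [mix, hu]
  · rintro ⟨⟨f, hf⟩, ⟨g, hg⟩⟩
    simp only [Prod.mk.injEq, Subtype.mk.injEq]
    constructor <;> funext u <;> by_cases hu : u ∈ s <;> simp [mix, hu]

open MeasureTheory ProbabilityTheory in
/-- Hoeffding's lemma for a two-point distribution. -/
theorem two_point (p t : ℝ) (hp0 : 0 ≤ p) (hp1 : p ≤ 1) (ht : 0 < t) :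
    p * Real.exp (t * (1 - p)) + (1 - p) * Real.exp (t * (0 - p)) ≤ Real.exp (t ^ 2 / 8) := by
  let μ : Measure ℝ := ENNReal.ofReal p • Measure.dirac 1 + ENNReal.ofReal (1 - p) • Measure.dirac 0
  have hμ : IsProbabilityMeasure μ := by
    constructor
    simp only [μ, Measure.coe_add, Measure.coe_smul, Pi.add_apply, Pi.smul_apply, measure_univ,
      smul_eq_mul, mul_one]
    rw [← ENNReal.ofReal_add hp0 (by linarith)]
    simp
  have hintegral : ∀ g : ℝ → ℝ, ∫ x, g x ∂μ = p * g 1 + (1 - p) * g 0 := by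
    intro g
    have i1 : Integrable g (ENNReal.ofReal p • Measure.dirac 1) :=
      (integrable_dirac (by simp)).smul_measure (by simp)
    have i2 : Integrable g (ENNReal.ofReal (1 - p) • Measure.dirac 0) :=
      (integrable_dirac (by simp)).smul_measure (by simp)
    rw [integral_add_measure i1 i2, integral_smul_measure, integral_smul_measure]
    simp [ENNReal.toReal_ofReal hp0, ENNReal.toReal_ofReal (sub_nonneg.mpr hp1)]
  have h := ProbabilityTheory.mgf_le_of_mem_Icc_of_integral_eq_zero (μ := μ)
    (X := fun x => x - p) (a := -p) (b := 1 - p) (t := t) (by fun_prop)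
    (by
      have : ∀ᵐ x ∂μ, x = 1 ∨ x = 0 := by
        simp only [μ]
        rw [ae_add_measure_iff]
        constructor
        · apply Measure.ae_smul_measure
          rw [ae_dirac_iff (by measurability)]; simp
        · apply Measure.ae_smul_measure
          rw [ae_dirac_iff (by measurability)]; simp
      filter_upwards [this] with x hx
      rcases hx with rfl | rfl <;> constructor <;> linarith)
    (by rw [hintegral]; ring) ht
  rw [mgf, hintegral] at h
  refine h.trans (le_of_eq ?_)
  congr 1
  simp
  ring

/-- Chernoff-type count for a uniformly random `C`-labelling. -/
theorem chernoff {V C : Type*} [Fintype V] [Fintype C] [Nonempty C] [DecidableEq V] [DecidableEq C]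
    (nb : Finset V) (S : Finset C) (t a : ℝ) (ht : 0 < t) :
    (Nat.card {f : V → C // nb.card * (S.card / Fintype.card C : ℝ) + a <
        ((nb.filter fun u => f u ∈ S).card : ℝ)} : ℝ)
      ≤ Real.exp (nb.card * (t ^ 2 / 8) - t * a) * Nat.card (V → C) := by
  classical
  set p : ℝ := S.card / Fintype.card C with hp
  have hC : (0:ℝ) < Fintype.card C := by exact_mod_cast Fintype.card_pos
  have hp0 : 0 ≤ p := by positivity
  have hp1 : p ≤ 1 := by
    rw [hp, div_le_one hC]; exact_mod_cast Finset.card_le_univ S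
  let g : V → C → ℝ := fun u c =>
    if u ∈ nb then Real.exp (t * ((if c ∈ S then 1 else 0) - p)) else 1
  have hg : ∀ u c, 0 ≤ g u c := by
    intro u c; simp only [g]; split_ifs <;> positivity
  have hprod : ∀ f : V → C, ∏ u, g u (f u)
      = Real.exp (t * (((nb.filter fun u => f u ∈ S).card : ℝ) - nb.card * p)) := by
    intro f
    simp only [g]
    rw [Finset.prod_ite_mem, Finset.univ_inter, ← Real.exp_sum, ← Finset.mul_sum,
      Finset.sum_sub_distrib]
    simp
  have hsum : ∀ u, ∑ c, g u c ≤
      Fintype.card C * (if u ∈ nb then Real.exp (t ^ 2 / 8) else 1) := by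
    intro u
    by_cases hu : u ∈ nb
    · simp only [g, hu, if_true]
      have : ∀ c, Real.exp (t * ((if c ∈ S then (1:ℝ) else 0) - p))
          = if c ∈ S then Real.exp (t * (1 - p)) else Real.exp (t * (0 - p)) := by
        intro c; split_ifs <;> rfl
      simp only [this]
      rw [Finset.sum_ite]
      simp only [Finset.sum_const, nsmul_eq_mul]
      have h1 : (Finset.univ.filter fun c => c ∈ S) = S := by ext; simp
      have h2 : ((Finset.univ.filter fun c => c ∉ S).card : ℝ) = Fintype.card C - S.card := by
        have := Finset.card_filter_add_card_filter_not (s := (Finset.univ : Finset C)) (fun c => c ∈ S)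
        rw [h1] at this
        rw [eq_sub_iff_add_eq, add_comm]
        exact_mod_cast this
      rw [h1, h2]
      have hS : (S.card : ℝ) = Fintype.card C * p := by rw [hp]; field_simp
      rw [hS]
      have := mul_le_mul_of_nonneg_left (two_point p t hp0 hp1 ht) hC.le
      linarith
    · simp [g, hu]
  have htot : ∑ f : V → C, ∏ u, g u (f u)
      ≤ Real.exp (nb.card * (t ^ 2 / 8)) * Nat.card (V → C) := by
    have e : ∑ f : V → C, ∏ u, g u (f u) = ∏ u, ∑ c, g u c := by
      rw [Finset.prod_univ_sum]
      simp
    rw [e]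
    calc _ ≤ ∏ u : V, (Fintype.card C * (if u ∈ nb then Real.exp (t ^ 2 / 8) else 1) : ℝ) :=
          Finset.prod_le_prod (fun u _ => Finset.sum_nonneg (fun c _ => hg u c)) (fun u _ => hsum u)
      _ = _ := by
          rw [Finset.prod_mul_distrib, Finset.prod_ite_mem, Finset.univ_inter]
          simp only [Finset.prod_const, ← Real.exp_nat_mul, Finset.card_univ]
          simp [mul_comm]
  have hlow : (Nat.card {f : V → C // nb.card * p + a <
        ((nb.filter fun u => f u ∈ S).card : ℝ)} : ℝ) * Real.exp (t * a)
      ≤ ∑ f : V → C, ∏ u, g u (f u) := by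
    have hW0 : ∀ f : V → C, 0 ≤ ∏ u, g u (f u) := fun f => Finset.prod_nonneg (fun u _ => hg u _)
    have hW1 : ∀ f : V → C, nb.card * p + a < ((nb.filter fun u => f u ∈ S).card : ℝ) →
        Real.exp (t * a) ≤ ∏ u, g u (f u) := by
      intro f hf
      rw [hprod f]
      apply Real.exp_le_exp.mpr
      apply mul_le_mul_of_nonneg_left _ ht.le
      linarith
    rw [Nat.card_eq_fintype_card, Fintype.card_subtype, Finset.card_filter]
    push_cast
    rw [Finset.sum_mul]
    apply Finset.sum_le_sum
    intro f _
    split_ifs with h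
    · rw [one_mul]; exact hW1 f h
    · rw [zero_mul]; exact hW0 f
  have h := hlow.trans htot
  rw [sub_eq_add_neg, Real.exp_add, Real.exp_neg]
  rw [← le_div_iff₀ (Real.exp_pos _)] at h
  refine h.trans (le_of_eq ?_)
  rw [div_eq_mul_inv]; ring


theorem numeric (d : ℕ) (hd : 54000 ≤ d) :
    4 * (2 ^ 14 * Real.exp (-(2 * d / 3249))) * ((d * d : ℕ) : ℝ) ≤ 1 := by
  have hd' : (54000 : ℝ) ≤ d := by exact_mod_cast hd
  have h33 : (210000000000000 : ℝ) ≤ Real.exp 33 := by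
    have h1 : (2.7182818283 : ℝ) ≤ Real.exp 1 := Real.exp_one_gt_d9.le
    have h2 : Real.exp 33 = Real.exp 1 ^ 33 := by rw [← Real.exp_nat_mul]; norm_num
    rw [h2]
    calc (210000000000000 : ℝ) ≤ 2.7182818283 ^ 33 := by norm_num
      _ ≤ _ := by gcongr
  have h2 : ((d : ℝ) / 54000) ^ 2 ≤ Real.exp (2 * (d / 54000 - 1)) := by
    have : (d : ℝ) / 54000 ≤ Real.exp (d / 54000 - 1) := by
      have := Real.add_one_le_exp ((d : ℝ) / 54000 - 1); linarith
    calc ((d : ℝ) / 54000) ^ 2 ≤ Real.exp (d / 54000 - 1) ^ 2 := by gcongr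
      _ = _ := by rw [← Real.exp_nat_mul]; norm_num
  have h3 : Real.exp 33 * Real.exp (2 * (d / 54000 - 1)) ≤ Real.exp (2 * d / 3249) := by
    rw [← Real.exp_add]
    apply Real.exp_le_exp.mpr
    linarith
  have h4 : (2 : ℝ) ^ 16 * d ^ 2 ≤ Real.exp (2 * d / 3249) := by
    refine le_trans ?_ h3
    calc (2 : ℝ) ^ 16 * d ^ 2 = (2 ^ 16 * 54000 ^ 2) * ((d : ℝ) / 54000) ^ 2 := by ring
      _ ≤ 210000000000000 * ((d : ℝ) / 54000) ^ 2 := by gcongr; norm_num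
      _ ≤ _ := by gcongr
  rw [Real.exp_neg]
  push_cast
  have hpos := Real.exp_pos (2 * (d : ℝ) / 3249)
  rw [show 4 * (2 ^ 14 * (Real.exp (2 * (d : ℝ) / 3249))⁻¹) * ((d : ℝ) * d)
    = (2 ^ 16 * d ^ 2) / Real.exp (2 * (d : ℝ) / 3249) by field_simp; ring]
  rw [div_le_one hpos]
  exact h4

/-- A labelling of the vertices by 14 labels such that every set of labels appears about the
expected number of times in every neighbourhood. -/
theorem exists_labelling {V : Type*} [Fintype V] [DecidableEq V] (nb : V → Finset V) (d : ℕ)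
    (hd : 54000 ≤ d) (hcard : ∀ v, (nb v).card = d) (hsymm : ∀ u v, u ∈ nb v → v ∈ nb u) :
    ∃ f : V → Fin 14, ∀ v, ∀ S : Finset (Fin 14),
      798 * ((nb v).filter fun u => f u ∈ S).card ≤ 57 * S.card * d + 14 * d := by
  classical
  have main := local_lemma (Ω := V → Fin 14) (ι := V)
    (fun v f => ∃ S : Finset (Fin 14),
      57 * S.card * d + 14 * d < 798 * ((nb v).filter fun u => f u ∈ S).card)
    (fun v => (nb v).biUnion nb) (2 ^ 14 * Real.exp (-(2 * d / 3249))) (d * d)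
    (by positivity) ?_ ?_ (numeric d hd) ?_ ?_
  · obtain ⟨f, hf⟩ := main
    refine ⟨f, fun v S => ?_⟩
    have := hf v
    push Not at this
    exact this S
  · intro v
    have : (nb v).Nonempty := by rw [← Finset.card_pos, hcard]; omega
    obtain ⟨u, hu⟩ := this
    exact Finset.mem_biUnion.mpr ⟨u, hu, hsymm _ _ hu⟩
  · intro v
    refine Finset.card_biUnion_le.trans ?_
    simp [hcard]
  · intro v
    have mono : ∀ P Q : (V → Fin 14) → Prop, (∀ f, P f → Q f) →
        (Nat.card {f // P f} : ℝ) ≤ Nat.card {f // Q f} := by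
      intro P Q h
      exact_mod_cast Nat.card_le_card_of_injective (Subtype.map id h)
        (Subtype.map_injective h Function.injective_id)
    have hS : ∀ S : Finset (Fin 14), (Nat.card {f : V → Fin 14 //
        57 * S.card * d + 14 * d < 798 * ((nb v).filter fun u => f u ∈ S).card} : ℝ)
        ≤ Real.exp (-(2 * d / 3249)) * Nat.card (V → Fin 14) := by
      intro S
      have h := chernoff (C := Fin 14) (nb v) S (4 / 57) (d / 57) (by norm_num)
      rw [hcard] at h
      have e : (d : ℝ) * ((4 / 57) ^ 2 / 8) - 4 / 57 * (d / 57) = -(2 * d / 3249) := by ring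
      rw [e] at h
      refine le_trans ?_ h
      have hsub : ∀ f : V → Fin 14,
          57 * S.card * d + 14 * d < 798 * ((nb v).filter fun u => f u ∈ S).card →
          (d : ℝ) * (S.card / Fintype.card (Fin 14) : ℝ) + d / 57 <
            ((nb v).filter fun u => f u ∈ S).card := by
        intro f hf
        have hf' : (57 * S.card * d + 14 * d : ℝ) < 798 * ((nb v).filter fun u => f u ∈ S).card := by
          exact_mod_cast hf
        rw [Fintype.card_fin]
        push_cast
        linarith
      exact mono _ _ hsub
    have hle : (Nat.card {f : V → Fin 14 // ∃ S : Finset (Fin 14),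
        57 * S.card * d + 14 * d < 798 * ((nb v).filter fun u => f u ∈ S).card} : ℝ)
        ≤ ∑ S : Finset (Fin 14), (Nat.card {f : V → Fin 14 //
        57 * S.card * d + 14 * d < 798 * ((nb v).filter fun u => f u ∈ S).card} : ℝ) := by
      simp only [Nat.card_eq_fintype_card, Fintype.card_subtype]
      have hsub : (Finset.univ.filter fun f : V → Fin 14 => ∃ S : Finset (Fin 14),
          57 * S.card * d + 14 * d < 798 * ((nb v).filter fun u => f u ∈ S).card) ⊆
          (Finset.univ : Finset (Finset (Fin 14))).biUnion (fun S => Finset.univ.filter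
            fun f : V → Fin 14 =>
              57 * S.card * d + 14 * d < 798 * ((nb v).filter fun u => f u ∈ S).card) := by
        intro f hf
        simp only [Finset.mem_filter, Finset.mem_univ, true_and, Finset.mem_biUnion] at hf ⊢
        exact hf
      exact_mod_cast (Finset.card_le_card hsub).trans Finset.card_biUnion_le
    refine hle.trans ((Finset.sum_le_sum (fun S _ => hS S)).trans (le_of_eq ?_))
    rw [Finset.sum_const, nsmul_eq_mul, Finset.card_univ, Fintype.card_finset, Fintype.card_fin]
    push_cast
    ring
  · intro v T hT
    refine indep_count (nb v) _ _ ?_ ?_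
    · rintro f g hfg ⟨S, hS⟩
      refine ⟨S, ?_⟩
      rwa [← Finset.filter_congr (s := nb v) (p := fun u => f u ∈ S)
        (fun u hu => by rw [hfg u hu])]
    · rintro f g hfg h w hw ⟨S, hS⟩
      refine h w hw ⟨S, ?_⟩
      rwa [Finset.filter_congr (s := nb w) (p := fun u => f u ∈ S) (q := fun u => g u ∈ S)]
      intro u hu
      rw [hfg u]
      intro huv
      exact Finset.disjoint_left.mp hT hw (Finset.mem_biUnion.mpr ⟨u, huv, hsymm _ _ hu⟩)


/-- The rule for the edges between two label classes: an entry below four is a fixed colour,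
four means that the row label controls the edges, five that the column label does. -/
def tab : Fin 14 → Fin 14 → ℕ :=
  ![![2, 4, 4, 2, 3, 2, 0, 5, 2, 1, 1, 1, 2, 1],
    ![5, 3, 1, 1, 4, 0, 2, 4, 1, 1, 1, 0, 0, 0],
    ![5, 1, 3, 1, 4, 2, 2, 4, 2, 0, 1, 0, 0, 0],
    ![2, 1, 1, 2, 5, 4, 0, 3, 2, 0, 1, 1, 1, 4],
    ![3, 5, 5, 4, 1, 4, 5, 1, 5, 1, 1, 5, 3, 5],
    ![2, 0, 2, 5, 5, 0, 2, 2, 0, 5, 4, 2, 2, 4],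
    ![0, 2, 2, 0, 4, 2, 3, 4, 2, 2, 5, 0, 5, 0],
    ![4, 5, 5, 3, 1, 2, 5, 1, 5, 4, 3, 5, 3, 5],
    ![2, 1, 2, 2, 4, 0, 2, 4, 3, 5, 5, 2, 2, 0],
    ![1, 1, 0, 0, 1, 4, 2, 5, 4, 2, 1, 2, 1, 0],
    ![1, 1, 1, 1, 1, 5, 4, 3, 4, 1, 1, 1, 1, 0],
    ![1, 0, 0, 1, 4, 2, 0, 4, 2, 2, 1, 3, 2, 0],
    ![2, 0, 0, 1, 3, 2, 4, 3, 2, 1, 1, 2, 1, 4],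
    ![1, 0, 0, 5, 4, 5, 0, 4, 0, 0, 0, 0, 5, 3]]

/-- The first (adjustable) colour of a label. -/
def al : Fin 14 → Fin 4 := ![2, 3, 3, 2, 1, 0, 3, 1, 3, 2, 1, 3, 1, 3]

/-- The second colour of a label. -/
def be : Fin 14 → Fin 4 := ![0, 0, 0, 1, 3, 2, 0, 3, 2, 1, 2, 2, 0, 0]

/-- Labels joined to `j` by the fixed colour `c`. -/
def fixedSet (j : Fin 14) (c : Fin 4) : Finset (Fin 14) :=
  Finset.univ.filter fun l => tab j l = c.val

/-- Labels controlled by `j`. -/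
def ctrlSet (j : Fin 14) : Finset (Fin 14) := Finset.univ.filter fun l => tab j l = 4

/-- Labels controlling `j` which may use colour `c`. -/
def outerSet (j : Fin 14) (c : Fin 4) : Finset (Fin 14) :=
  Finset.univ.filter fun l => tab j l = 5 ∧ (c = al l ∨ c = be l)

/-- Normalised lower bound of the degree in colour `c`. -/
def lowerB (j : Fin 14) (c : Fin 4) : ℕ :=
  (fixedSet j c).card + if c = be j then (ctrlSet j).card - 1 else 0

/-- Normalised upper bound of the degree in colour `c`. -/
def upperB (j : Fin 14) (c : Fin 4) : ℕ :=
  (fixedSet j c).card + (if c = al j then 1 else 0) + (if c = be j then (ctrlSet j).card else 0)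
    + (outerSet j c).card

theorem tab_symm : ∀ j l, tab j l = tab l j ∨ (tab j l = 4 ∧ tab l j = 5) ∨
    (tab j l = 5 ∧ tab l j = 4) := by decide +kernel

theorem tab_ctrl : ∀ j l, tab j l = 4 ↔ tab l j = 5 := by decide +kernel

theorem tab_le : ∀ j l, tab j l ≤ 5 := by decide +kernel

theorem tab_diag : ∀ j, tab j j = (al j).val := by decide +kernel

theorem al_ne_be : ∀ j, al j ≠ be j := by decide +kernel

theorem ctrl_avoid : ∀ j l, tab j l = 5 → al j ≠ al l ∧ al j ≠ be l := by decide +kernel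

theorem ctrl_card : ∀ j, 2 ≤ (ctrlSet j).card := by decide +kernel

theorem separation : ∀ j l, j ≠ l → ∀ c : Fin 4,
    (tab j l = c.val ∨ (tab j l = 4 ∧ (c = al j ∨ c = be j)) ∨
      (tab j l = 5 ∧ (c = al l ∨ c = be l))) →
    upperB l c + 1 ≤ lowerB j c ∨ upperB j c + 1 ≤ lowerB l c := by decide +kernel

theorem greedy {V : Type*} [Fintype V] [DecidableEq V] (H : V → Finset V)
    (hirr : ∀ v, v ∉ H v) (hsymm : ∀ u v, u ∈ H v → v ∈ H u) (b : V → ℕ) :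
    ∃ x : V → ℕ, (∀ v, x v ≤ (H v).card) ∧ ∀ v w, w ∈ H v → b v + x v ≠ b w + x w := by
  have key : ∀ s : Finset V, ∃ x : V → ℕ, (∀ v, x v ≤ (H v).card) ∧
      ∀ v ∈ s, ∀ w ∈ s, w ∈ H v → b v + x v ≠ b w + x w := by
    intro s
    induction s using Finset.induction_on with
    | empty => exact ⟨fun _ => 0, by simp, by simp⟩
    | insert a s ha ih =>
      obtain ⟨x, hx, hs⟩ := ih
      have : ∃ t ∈ (Finset.range ((H a).card + 1)).image (fun t => b a + t),
          t ∉ (H a).image (fun w => b w + x w) := by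
        apply Finset.exists_mem_notMem_of_card_lt_card
        rw [Finset.card_image_of_injective _ (add_right_injective (b a)), Finset.card_range]
        exact Nat.lt_succ_of_le Finset.card_image_le
      obtain ⟨t, ht, htn⟩ := this
      obtain ⟨y, hy, rfl⟩ := Finset.mem_image.mp ht
      have hy' : y ≤ (H a).card := by simpa [Nat.lt_succ_iff] using hy
      have hno : ∀ w ∈ H a, b a + y ≠ b w + x w := by
        intro w hw h
        exact htn (Finset.mem_image.mpr ⟨w, hw, h.symm⟩)
      refine ⟨Function.update x a y, ?_, ?_⟩
      · intro v
        by_cases hv : v = a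
        · subst hv; simpa using hy'
        · simpa [hv] using hx v
      · intro v hv w hw hvw
        by_cases hva : v = a
        · subst hva
          have hwv : w ≠ v := by rintro rfl; exact hirr _ hvw
          simpa [hwv] using hno w hvw
        · by_cases hwa : w = a
          · subst hwa
            simpa [hva] using (hno v (hsymm _ _ hvw)).symm
          · have hv' : v ∈ s := by simpa [hva] using hv
            have hw' : w ∈ s := by simpa [hwa] using hw
            simpa [hva, hwa] using hs v hv' w hw' hvw
  obtain ⟨x, hx, h⟩ := key Finset.univ
  exact ⟨x, hx, fun v w => h v (Finset.mem_univ _) w (Finset.mem_univ _)⟩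

/-- The colour of the pair `v w`, given the labelling `f` and the choice `X`. -/
def col {V : Type*} [DecidableEq V] (f : V → Fin 14) (X : V → Finset V) (v w : V) : Fin 4 :=
  if tab (f v) (f w) = 4 then (if w ∈ X v then al (f v) else be (f v))
  else if tab (f v) (f w) = 5 then (if v ∈ X w then al (f w) else be (f w))
  else Fin.ofNat 4 (tab (f v) (f w))

theorem col_symm {V : Type*} [DecidableEq V] (f : V → Fin 14) (X : V → Finset V) (v w : V) :
    col f X v w = col f X w v := by
  unfold col
  have h1 := tab_ctrl (f v) (f w)
  have h2 := tab_ctrl (f w) (f v)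
  rcases tab_symm (f v) (f w) with h | ⟨h, h'⟩ | ⟨h, h'⟩
  · have n4 : tab (f w) (f v) ≠ 4 := by omega
    have n5 : tab (f w) (f v) ≠ 5 := by omega
    simp [h, n4, n5]
  · simp [h, h']
  · simp [h, h']

theorem col_fixed {V : Type*} [DecidableEq V] (f : V → Fin 14) (X : V → Finset V) (v w : V)
    (c : Fin 4) (h : tab (f v) (f w) = c.val) : col f X v w = c := by
  have := c.isLt
  unfold col
  rw [if_neg (by omega), if_neg (by omega), h]
  ext
  simp [Fin.ofNat]

theorem col_ctrl {V : Type*} [DecidableEq V] (f : V → Fin 14) (X : V → Finset V) (v w : V)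
    (h : tab (f v) (f w) = 4) : col f X v w = if w ∈ X v then al (f v) else be (f v) := by
  unfold col
  rw [if_pos h]

theorem col_outer {V : Type*} [DecidableEq V] (f : V → Fin 14) (X : V → Finset V) (v w : V)
    (h : tab (f v) (f w) = 5) : col f X v w = al (f w) ∨ col f X v w = be (f w) := by
  unfold col
  rw [if_neg (by omega), if_pos h]
  split_ifs <;> simp

theorem tab_cases (j l : Fin 14) : (∃ c : Fin 4, tab j l = c.val) ∨ tab j l = 4 ∨ tab j l = 5 := by
  have := tab_le j l
  by_cases h : tab j l < 4
  · exact Or.inl ⟨⟨_, h⟩, rfl⟩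
  · omega

theorem col_poss {V : Type*} [DecidableEq V] (f : V → Fin 14) (X : V → Finset V) (v w : V)
    (c : Fin 4) (hc : col f X v w = c) :
    tab (f v) (f w) = c.val ∨ (tab (f v) (f w) = 4 ∧ (c = al (f v) ∨ c = be (f v))) ∨
      (tab (f v) (f w) = 5 ∧ (c = al (f w) ∨ c = be (f w))) := by
  subst hc
  rcases tab_cases (f v) (f w) with ⟨c, h⟩ | h | h
  · left; rw [h, col_fixed f X v w c h]
  · right; left
    refine ⟨h, ?_⟩
    rw [col_ctrl f X v w h]
    split_ifs <;> simp
  · right; right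
    exact ⟨h, col_outer f X v w h⟩

/-- The number of neighbours of `v` with labels in `S`. -/
def cnt {V : Type*} (nb : V → Finset V) (f : V → Fin 14) (v : V) (S : Finset (Fin 14)) : ℕ :=
  ((nb v).filter fun u => f u ∈ S).card

/-- The number of neighbours of `v` along colour `c`. -/
def cdeg {V : Type*} [DecidableEq V] (nb : V → Finset V) (f : V → Fin 14) (X : V → Finset V)
    (v : V) (c : Fin 4) : ℕ :=
  ((nb v).filter fun u => col f X v u = c).card

theorem cnt_union {V : Type*} [DecidableEq V] (nb : V → Finset V) (f : V → Fin 14) (v : V)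
    (S T : Finset (Fin 14)) (h : Disjoint S T) :
    cnt nb f v (S ∪ T) = cnt nb f v S + cnt nb f v T := by
  unfold cnt
  rw [← Finset.card_union_of_disjoint]
  · congr 1
    ext u
    simp only [Finset.mem_filter, Finset.mem_union]
    tauto
  · rw [Finset.disjoint_left]
    intro u hu hu'
    simp only [Finset.mem_filter] at hu hu'
    exact Finset.disjoint_left.mp h hu.2 hu'.2

theorem cnt_lower {V : Type*} [DecidableEq V] (nb : V → Finset V) (f : V → Fin 14) (d : ℕ)
    (hcard : ∀ v, (nb v).card = d)
    (hf : ∀ v S, 798 * cnt nb f v S ≤ 57 * S.card * d + 14 * d) (v : V) (S : Finset (Fin 14)) :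
    57 * S.card * d ≤ 798 * cnt nb f v S + 14 * d := by
  have h1 := cnt_union nb f v S Sᶜ disjoint_compl_right
  have h2 : cnt nb f v (S ∪ Sᶜ) = d := by
    rw [← hcard v, Finset.union_compl]; simp [cnt]
  have h3 := hf v Sᶜ
  have h4 : S.card + Sᶜ.card = 14 := by
    simpa using Finset.card_add_card_compl S
  have h5 : S.card * d + Sᶜ.card * d = 14 * d := by rw [← add_mul, h4]
  rw [mul_assoc] at h3 ⊢
  omega

section degrees

variable {V : Type*} [DecidableEq V] (nb : V → Finset V) (f : V → Fin 14) (X : V → Finset V)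

theorem mem_fixedSet {j l : Fin 14} {c : Fin 4} : l ∈ fixedSet j c ↔ tab j l = c.val := by
  simp [fixedSet]

theorem mem_ctrlSet {j l : Fin 14} : l ∈ ctrlSet j ↔ tab j l = 4 := by
  simp [ctrlSet]

theorem mem_outerSet {j l : Fin 14} {c : Fin 4} :
    l ∈ outerSet j c ↔ tab j l = 5 ∧ (c = al l ∨ c = be l) := by
  simp [outerSet]

theorem disj_fc (j : Fin 14) (c : Fin 4) : Disjoint (fixedSet j c) (ctrlSet j) := by
  rw [Finset.disjoint_left]
  intro l h h'
  rw [mem_fixedSet] at h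
  rw [mem_ctrlSet] at h'
  have := c.isLt
  omega

theorem cdeg_al (v : V) (hX : X v ⊆ (nb v).filter fun u => f u ∈ ctrlSet (f v)) :
    cdeg nb f X v (al (f v)) = cnt nb f v (fixedSet (f v) (al (f v))) + (X v).card := by
  unfold cdeg cnt
  rw [← Finset.card_union_of_disjoint]
  · congr 1
    ext u
    simp only [Finset.mem_filter, Finset.mem_union, mem_fixedSet]
    constructor
    · rintro ⟨hu, hc⟩
      rcases tab_cases (f v) (f u) with ⟨c, h⟩ | h | h
      · rw [col_fixed f X v u c h] at hc
        subst hc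
        exact Or.inl ⟨hu, h⟩
      · rw [col_ctrl f X v u h] at hc
        split_ifs at hc with hx
        · exact Or.inr hx
        · exact absurd hc.symm (al_ne_be _)
      · have a := ctrl_avoid _ _ h
        rcases col_outer f X v u h with h' | h'
        · exact absurd (hc.symm.trans h') a.1
        · exact absurd (hc.symm.trans h') a.2
    · rintro (⟨hu, h⟩ | hx)
      · exact ⟨hu, col_fixed f X v u _ h⟩
      · have := hX hx
        simp only [Finset.mem_filter, mem_ctrlSet] at this
        refine ⟨this.1, ?_⟩
        rw [col_ctrl f X v u this.2, if_pos hx]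
  · refine Finset.disjoint_of_subset_right hX ?_
    rw [Finset.disjoint_left]
    intro u hu hu'
    simp only [Finset.mem_filter] at hu hu'
    exact Finset.disjoint_left.mp (disj_fc _ _) hu.2 hu'.2

theorem cdeg_ge_fixed (v : V) (c : Fin 4) :
    cnt nb f v (fixedSet (f v) c) ≤ cdeg nb f X v c := by
  unfold cdeg cnt
  apply Finset.card_le_card
  intro u hu
  simp only [Finset.mem_filter, mem_fixedSet] at hu ⊢
  exact ⟨hu.1, col_fixed f X v u _ hu.2⟩

theorem cdeg_be_ge (v : V) :
    cnt nb f v (fixedSet (f v) (be (f v)) ∪ ctrlSet (f v)) ≤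
      cdeg nb f X v (be (f v)) + (X v).card := by
  unfold cdeg cnt
  refine le_trans (Finset.card_le_card ?_) (Finset.card_union_le _ _)
  intro u hu
  simp only [Finset.mem_filter, Finset.mem_union, mem_fixedSet, mem_ctrlSet] at hu ⊢
  rcases hu with ⟨hu, h | h⟩
  · exact Or.inl ⟨hu, col_fixed f X v u _ h⟩
  · by_cases hx : u ∈ X v
    · exact Or.inr hx
    · refine Or.inl ⟨hu, ?_⟩
      rw [col_ctrl f X v u h, if_neg hx]

theorem cdeg_le (v : V) (c : Fin 4) (hc : c ≠ al (f v)) :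
    cdeg nb f X v c ≤ cnt nb f v
      ((fixedSet (f v) c ∪ (if c = be (f v) then ctrlSet (f v) else ∅)) ∪ outerSet (f v) c) := by
  unfold cdeg cnt
  apply Finset.card_le_card
  intro u hu
  simp only [Finset.mem_filter] at hu ⊢
  refine ⟨hu.1, ?_⟩
  rcases col_poss f X v u c hu.2 with h | ⟨h, h'⟩ | h
  · exact Finset.mem_union_left _ (Finset.mem_union_left _ (mem_fixedSet.mpr h))
  · refine Finset.mem_union_left _ (Finset.mem_union_right _ ?_)
    rw [if_pos (h'.resolve_left hc)]
    exact mem_ctrlSet.mpr h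
  · exact Finset.mem_union_right _ (mem_outerSet.mpr h)

variable (d : ℕ)

theorem cdeg_upper
    (hf : ∀ v S, 798 * cnt nb f v S ≤ 57 * S.card * d + 14 * d)
    (hX : ∀ v, X v ⊆ (nb v).filter fun u => f u ∈ ctrlSet (f v))
    (hXc : ∀ v, (X v).card ≤ cnt nb f v {f v}) (v : V) (c : Fin 4) :
    798 * cdeg nb f X v c ≤ 57 * (upperB (f v) c * d) + 28 * d := by
  by_cases hc : c = al (f v)
  · subst hc
    rw [cdeg_al nb f X v (hX v)]
    have h1 := hf v (fixedSet (f v) (al (f v)))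
    have h2 := hf v {f v}
    have h3 := hXc v
    have h4 : ((fixedSet (f v) (al (f v))).card + 1) * d ≤ upperB (f v) (al (f v)) * d := by
      apply Nat.mul_le_mul_right
      simp only [upperB, if_true]
      omega
    rw [Finset.card_singleton] at h2
    rw [mul_assoc] at h1
    rw [add_mul] at h4
    omega
  · have h1 := cdeg_le nb f X v c hc
    have h2 := hf v
      ((fixedSet (f v) c ∪ (if c = be (f v) then ctrlSet (f v) else ∅)) ∪ outerSet (f v) c)
    have h3 : ((fixedSet (f v) c ∪ (if c = be (f v) then ctrlSet (f v) else ∅))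
        ∪ outerSet (f v) c).card * d ≤ upperB (f v) c * d := by
      apply Nat.mul_le_mul_right
      refine (Finset.card_union_le _ _).trans ?_
      have := Finset.card_union_le (fixedSet (f v) c) (if c = be (f v) then ctrlSet (f v) else ∅)
      unfold upperB
      split_ifs at this ⊢
      · omega
      · simp only [Finset.card_empty] at this
        omega
    rw [mul_assoc] at h2
    omega

theorem cdeg_lower
    (hcard : ∀ v, (nb v).card = d)
    (hf : ∀ v S, 798 * cnt nb f v S ≤ 57 * S.card * d + 14 * d)
    (hXc : ∀ v, (X v).card ≤ cnt nb f v {f v}) (v : V) (c : Fin 4) :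
    57 * (lowerB (f v) c * d) ≤ 798 * cdeg nb f X v c + 28 * d := by
  by_cases hc : c = be (f v)
  · subst hc
    have h1 := cdeg_be_ge nb f X v
    have h2 := cnt_lower nb f d hcard hf v (fixedSet (f v) (be (f v)) ∪ ctrlSet (f v))
    have h3 := hXc v
    have h4 := hf v {f v}
    have h5 : (lowerB (f v) (be (f v)) + 1) * d =
        (fixedSet (f v) (be (f v)) ∪ ctrlSet (f v)).card * d := by
      congr 1
      rw [Finset.card_union_of_disjoint (disj_fc _ _)]
      have := ctrl_card (f v)
      simp only [lowerB, if_true]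
      omega
    rw [Finset.card_singleton] at h4
    rw [mul_assoc, ← h5, add_mul] at h2
    omega
  · have h1 := cdeg_ge_fixed nb f X v c
    have h2 := cnt_lower nb f d hcard hf v (fixedSet (f v) c)
    have h3 : lowerB (f v) c = (fixedSet (f v) c).card := by simp [lowerB, hc]
    rw [mul_assoc, ← h3] at h2
    omega

end degrees

/-- The combinatorial core: a symmetric colouring with distinct degrees. -/
theorem exists_colouring {V : Type*} [Fintype V] [DecidableEq V] (nb : V → Finset V) (d : ℕ)
    (hd : 54000 ≤ d) (hcard : ∀ v, (nb v).card = d) (hsymm : ∀ u v, u ∈ nb v → v ∈ nb u)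
    (hirr : ∀ v, v ∉ nb v) :
    ∃ C : V → V → Fin 4, (∀ v w, C v w = C w v) ∧ ∀ v w, w ∈ nb v →
      ((nb v).filter fun u => C v u = C v w).card ≠
        ((nb w).filter fun u => C w u = C v w).card := by
  obtain ⟨f, hf⟩ := exists_labelling nb d hd hcard hsymm
  have hf : ∀ v S, 798 * cnt nb f v S ≤ 57 * S.card * d + 14 * d := hf
  obtain ⟨x, hx, hdist⟩ := greedy (fun v => (nb v).filter fun u => f u ∈ ({f v} : Finset (Fin 14)))
    (fun v h => hirr v (Finset.mem_filter.mp h).1)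
    (fun u v h => by
      simp only [Finset.mem_filter, Finset.mem_singleton] at h ⊢
      exact ⟨hsymm _ _ h.1, h.2.symm⟩)
    (fun v => cnt nb f v (fixedSet (f v) (al (f v))))
  have hx' : ∀ v, x v ≤ cnt nb f v {f v} := hx
  have hXe : ∀ v, ∃ X ⊆ (nb v).filter (fun u => f u ∈ ctrlSet (f v)), X.card = x v := by
    intro v
    apply Finset.exists_subset_card_eq
    change x v ≤ cnt nb f v (ctrlSet (f v))
    refine (hx' v).trans ?_
    have h1 := hf v {f v}
    have h2 := cnt_lower nb f d hcard hf v (ctrlSet (f v))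
    have h3 : 2 * d ≤ (ctrlSet (f v)).card * d := Nat.mul_le_mul_right _ (ctrl_card _)
    rw [Finset.card_singleton] at h1
    rw [mul_assoc] at h2
    omega
  choose X hX hXc using hXe
  have hXc' : ∀ v, (X v).card ≤ cnt nb f v {f v} := fun v => (hXc v).trans_le (hx' v)
  refine ⟨col f X, col_symm f X, fun v w hw => ?_⟩
  change cdeg nb f X v (col f X v w) ≠ cdeg nb f X w (col f X v w)
  by_cases hvw : f v = f w
  · have hcol : col f X v w = al (f v) := by
      apply col_fixed
      rw [← hvw, tab_diag]
    have h1 := cdeg_al nb f X v (hX v)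
    have h2 := cdeg_al nb f X w (hX w)
    rw [← hvw] at h2
    rw [hcol, h1, h2, hXc, hXc]
    have := hdist v w (by simp [hw, hvw])
    rw [← hvw] at this
    exact this
  · have u1 := cdeg_upper nb f X d hf hX hXc' v (col f X v w)
    have u2 := cdeg_upper nb f X d hf hX hXc' w (col f X v w)
    have l1 := cdeg_lower nb f X d hcard hf hXc' v (col f X v w)
    have l2 := cdeg_lower nb f X d hcard hf hXc' w (col f X v w)
    intro heq
    rcases separation _ _ hvw _ (col_poss f X v w _ rfl) with h | h
    · have := Nat.mul_le_mul_right d h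
      rw [add_mul] at this
      omega
    · have := Nat.mul_le_mul_right d h
      rw [add_mul] at this
      omega

theorem ncard_edges {V : Type*} [Fintype V] [DecidableEq V] (G : SimpleGraph V)
    [DecidableRel G.Adj] (C : V → V → Fin 4) (hC : ∀ v w, C v w = C w v) (i : Fin 4) (v : V) :
    {e ∈ {e | e ∈ G.edgeSet ∧ Sym2.lift ⟨C, hC⟩ e = i} | v ∈ e}.ncard =
      ((G.neighborFinset v).filter fun u => C v u = i).card := by
  rw [← Set.ncard_coe_finset, ← Set.ncard_image_of_injective (f := fun u => s(v, u)) _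
    (fun a b h => Sym2.congr_right.mp h)]
  congr 1
  ext e
  simp only [Set.mem_ofPred_eq, Set.mem_image, Finset.coe_filter, SimpleGraph.mem_neighborFinset]
  constructor
  · rintro ⟨⟨he, hc⟩, hv⟩
    obtain ⟨u, rfl⟩ := hv
    exact ⟨u, ⟨by simpa using he, by simpa using hc⟩, rfl⟩
  · rintro ⟨u, ⟨ha, hc⟩, rfl⟩
    exact ⟨⟨by simpa using ha, by simpa using hc⟩, by simp⟩

end LocIrr

/-- Every `d`-regular finite simple graph with `d ≥ 54000` is decomposable into
4 locally irregular subgraphs. -/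
theorem regular_decomposable_four_locally_irregular
    {V : Type*} [Fintype V] (G : SimpleGraph V) [DecidableRel G.Adj]
    (d : ℕ) (hd : 54000 ≤ d) (hreg : G.IsRegularOfDegree d) :
    ∃ c : Sym2 V → Fin 4,
      ∀ i : Fin 4, LocallyIrregular {e | e ∈ G.edgeSet ∧ c e = i} := by
  classical
  obtain ⟨C, hC, h⟩ := LocIrr.exists_colouring (fun v => G.neighborFinset v) d hd
    (fun v => by rw [G.card_neighborFinset_eq_degree]; exact hreg v)
    (fun u v huv => by
      simp only [SimpleGraph.mem_neighborFinset] at huv ⊢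
      exact huv.symm)
    (fun v => by simp)
  refine ⟨Sym2.lift ⟨C, hC⟩, fun i v w hvw => ?_⟩
  obtain ⟨ha, hc⟩ := hvw
  have ha' : G.Adj v w := by simpa using ha
  have hc' : C v w = i := by simpa using hc
  unfold edgeDeg
  rw [LocIrr.ncard_edges, LocIrr.ncard_edges, ← hc']
  exact h v w (by simpa using ha')
end

section
/- Let G=(V,E) be a finite simple graph with minimum degree at least 12, and suppose that for every vertex v an integer λ_v ≥ 2 with 6·λ_v ≤ d(v) has been chosen, where d(v) denotes the degree of v in G. Then for every assignment t : V → ℤ there exists a spanning subgraph H of G such that for every vertex v: d_H(v) ∈ [d(v)/3, 2·d(v)/3], and d_H(v) ≡ t(v) (mod λ_v) or d_H(v) ≡ t(v)+1 (mod λ_v). -/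
open Classical in
/-- number of `H`-neighbours of `v` in `S`, as an integer -/
noncomputable def dcsNb {V : Type*} (H : SimpleGraph V) (v : V) (S : Finset V) : ℤ :=
  ∑ w ∈ S, if H.Adj v w then 1 else 0

/-- degree as an integer -/
noncomputable def dcsDg {V : Type*} [Fintype V] (H : SimpleGraph V) (v : V) : ℤ :=
  dcsNb H v Finset.univ

open Classical in
lemma dcsNb_eq_card {V : Type*} (H : SimpleGraph V) (v : V) (S : Finset V) :
    dcsNb H v S = ((S.filter (fun w => H.Adj v w)).card : ℤ) := by
  simp [dcsNb]

lemma dcsNb_nonneg {V : Type*} (H : SimpleGraph V) (v : V) (S : Finset V) : 0 ≤ dcsNb H v S := by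
  rw [dcsNb_eq_card]; positivity

lemma dcsNb_mono {V : Type*} {H G : SimpleGraph V} (h : H ≤ G) (v : V) (S : Finset V) :
    dcsNb H v S ≤ dcsNb G v S := by
  classical
  unfold dcsNb
  refine Finset.sum_le_sum fun w _ => ?_
  have := @h v w
  by_cases h1 : H.Adj v w
  · simp [h1, this h1]
  · simp only [h1, if_false]; split_ifs <;> simp

open Classical in
lemma dcsNb_compl {V : Type*} [Fintype V] (H : SimpleGraph V) (v : V) (S : Finset V) :
    dcsNb H v S + dcsNb H v Sᶜ = dcsDg H v := by
  unfold dcsDg dcsNb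
  exact Finset.sum_add_sum_compl S _

lemma dcsNb_comm {V : Type*} (H : SimpleGraph V) (A B : Finset V) :
    ∑ v ∈ A, dcsNb H v B = ∑ u ∈ B, dcsNb H u A := by
  classical
  unfold dcsNb
  rw [Finset.sum_comm]
  simp [H.adj_comm]

open Classical in
lemma dcs_add {V : Type*} [Fintype V] {G H : SimpleGraph V} (hH : H ≤ G) (u : V) (S : Finset V)
    (hS : ∀ s ∈ S, G.Adj u s ∧ ¬ H.Adj u s) :
    ∃ H' ≤ G, (∀ x, dcsDg H' x = dcsDg H x + (if x ∈ S then 1 else 0) +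
        (if x = u then (S.card : ℤ) else 0)) ∧
      ∀ x y, H'.Adj x y ↔ H.Adj x y ∨ (x = u ∧ y ∈ S) ∨ (y = u ∧ x ∈ S) := by
  have hu : u ∉ S := fun h => G.loopless.irrefl u (hS u h).1
  let H' : SimpleGraph V :=
    { Adj := fun x y => H.Adj x y ∨ (x = u ∧ y ∈ S) ∨ (y = u ∧ x ∈ S)
      symm := ⟨by
        rintro x y (h | h | h)
        · exact Or.inl h.symm
        · exact Or.inr (Or.inr h)
        · exact Or.inr (Or.inl h)⟩
      loopless := ⟨by
        rintro x (h | ⟨rfl, h⟩ | ⟨rfl, h⟩)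
        · exact H.loopless.irrefl x h
        · exact hu h
        · exact hu h⟩ }
  refine ⟨H', ?_, ?_, fun x y => Iff.rfl⟩
  · rintro x y (h | ⟨rfl, h⟩ | ⟨rfl, h⟩)
    · exact hH h
    · exact (hS _ h).1
    · exact (hS _ h).1.symm
  · intro x
    have h2 : (if x = u then (S.card : ℤ) else 0) = ∑ y, if (x = u ∧ y ∈ S) then (1:ℤ) else 0 := by
      split_ifs with h <;> simp [h]
    have h3 : (if x ∈ S then (1 : ℤ) else 0) = ∑ y, if (y = u ∧ x ∈ S) then (1:ℤ) else 0 := by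
      split_ifs with h <;> simp [h]
    rw [h2, h3]
    unfold dcsDg dcsNb
    rw [← Finset.sum_add_distrib, ← Finset.sum_add_distrib]
    refine Finset.sum_congr rfl fun y _ => ?_
    have hA : H'.Adj x y ↔ H.Adj x y ∨ (x = u ∧ y ∈ S) ∨ (y = u ∧ x ∈ S) := Iff.rfl
    have e1 : x = u ∧ y ∈ S → ¬ H.Adj x y := by
      rintro ⟨rfl, h⟩; exact (hS _ h).2
    have e2 : y = u ∧ x ∈ S → ¬ H.Adj x y := by
      rintro ⟨rfl, h⟩ h'; exact (hS _ h).2 h'.symm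
    have e3 : x = u ∧ y ∈ S → ¬ (y = u ∧ x ∈ S) := by
      rintro ⟨rfl, h⟩ ⟨_, h'⟩; exact hu h'
    simp only [hA]
    by_cases c1 : H.Adj x y
    · have n2 : ¬ (x = u ∧ y ∈ S) := fun h => e1 h c1
      have n3 : ¬ (y = u ∧ x ∈ S) := fun h => e2 h c1
      rw [if_pos (Or.inl c1), if_pos c1, if_neg n2, if_neg n3]; norm_num
    · by_cases c2 : x = u ∧ y ∈ S
      · rw [if_pos (Or.inr (Or.inl c2)), if_neg c1, if_pos c2, if_neg (e3 c2)]; norm_num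
      · by_cases c3 : y = u ∧ x ∈ S
        · rw [if_pos (Or.inr (Or.inr c3)), if_neg c1, if_neg c2, if_pos c3]; norm_num
        · rw [if_neg (fun h => h.elim c1 (fun h => h.elim c2 c3)), if_neg c1, if_neg c2, if_neg c3]; norm_num

open Classical in
lemma dcs_del {V : Type*} [Fintype V] {G H : SimpleGraph V} (hH : H ≤ G) (u : V) (S : Finset V)
    (hS : ∀ s ∈ S, H.Adj u s) :
    ∃ H' ≤ G, (∀ x, dcsDg H' x = dcsDg H x - (if x ∈ S then 1 else 0) -
        (if x = u then (S.card : ℤ) else 0)) ∧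
      ∀ x y, H'.Adj x y ↔ H.Adj x y ∧ ¬ (x = u ∧ y ∈ S) ∧ ¬ (y = u ∧ x ∈ S) := by
  let H' : SimpleGraph V :=
    { Adj := fun x y => H.Adj x y ∧ ¬ (x = u ∧ y ∈ S) ∧ ¬ (y = u ∧ x ∈ S)
      symm := ⟨fun x y h => ⟨h.1.symm, h.2.2, h.2.1⟩⟩
      loopless := ⟨fun x h => H.loopless.irrefl x h.1⟩ }
  have hle : H' ≤ H := fun x y h => h.1
  obtain ⟨K, -, hK, hK'⟩ := dcs_add hle u S
    (fun s hs => ⟨hS s hs, fun h => h.2.1 ⟨rfl, hs⟩⟩)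
  have : K = H := by
    ext x y
    rw [hK']
    constructor
    · rintro (h | ⟨rfl, h⟩ | ⟨rfl, h⟩)
      · exact h.1
      · exact hS _ h
      · exact (hS _ h).symm
    · intro h
      by_cases c2 : x = u ∧ y ∈ S
      · tauto
      by_cases c3 : y = u ∧ x ∈ S
      · tauto
      exact Or.inl ⟨h, c2, c3⟩
  refine ⟨H', hle.trans hH, fun x => ?_, fun x y => Iff.rfl⟩
  have := hK x
  subst K
  linarith

/-- the shift relation -/
def DcsShift {V : Type*} [Fintype V] (G H : SimpleGraph V) (a : V → ℤ) (A B : Finset V)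
    (v : V) (s : ℤ) : Prop :=
  ∃ H' ≤ G, ∃ w, dcsDg H w < a w ∧
    (∀ x, (x ≠ w → x ≠ v → dcsDg H' x = dcsDg H x) ∧ (x = w → x ≠ v → dcsDg H' x = dcsDg H x + 1) ∧
      (x ≠ w → x = v → dcsDg H' x = dcsDg H x + s) ∧
      (x = w → x = v → dcsDg H' x = dcsDg H x + 1 + s)) ∧
    ∀ x y, ¬ (x ∈ A ∧ y ∈ B) → ¬ (y ∈ A ∧ x ∈ B) → (H'.Adj x y ↔ H.Adj x y)

/-- good pairs -/
def DcsGood {V : Type*} [Fintype V] (G H : SimpleGraph V) (a : V → ℤ) (A B : Finset V) : Prop :=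
  (∀ v ∈ A, dcsDg H v ≤ a v) ∧ (∀ u ∈ B, dcsDg H u = a u + 1) ∧
  (∀ w, dcsDg H w < a w → w ∈ A) ∧
  (∀ v ∈ A, DcsShift G H a A B v (-1)) ∧ (∀ u ∈ B, DcsShift G H a A B u 1)

lemma DcsShift.mono {V : Type*} [Fintype V] {G H : SimpleGraph V} {a : V → ℤ} {A B A' B' : Finset V}
    {v : V} {s : ℤ} (h : DcsShift G H a A B v s) (hA : A ⊆ A') (hB : B ⊆ B') :
    DcsShift G H a A' B' v s := by
  obtain ⟨H', h1, w, h2, h3, h4⟩ := h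
  exact ⟨H', h1, w, h2, h3, fun x y hx hy => h4 x y (fun h => hx ⟨hA h.1, hB h.2⟩)
    (fun h => hy ⟨hA h.1, hB h.2⟩)⟩

/-- feasible configurations -/
def DcsFeas {V : Type*} [Fintype V] (G : SimpleGraph V) (m p : V → ℤ) (H : SimpleGraph V)
    (a : V → ℤ) : Prop :=
  H ≤ G ∧ ∀ v, (a v = m v ∨ a v = p v) ∧ dcsDg H v ≤ a v + 1

/-- no strictly better feasible configuration (pointwise sense) -/
def DcsMin {V : Type*} [Fintype V] (G : SimpleGraph V) (m p : V → ℤ) (H : SimpleGraph V)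
    (a : V → ℤ) : Prop :=
  ∀ H' a', DcsFeas G m p H' a' →
    (∀ v, max (a' v - dcsDg H' v) 0 ≤ max (a v - dcsDg H v) 0) →
    ∀ w, max (a w - dcsDg H w) 0 ≤ max (a' w - dcsDg H' w) 0

lemma dcs_exists_min {V : Type*} [Fintype V] (G : SimpleGraph V) (m p : V → ℤ)
    (hm : ∀ v, 0 ≤ m v) : ∃ H a, DcsFeas G m p H a ∧ DcsMin G m p H a := by
  classical
  have key : ∀ n : ℕ, ∀ H a, DcsFeas G m p H a → (∑ v, max (a v - dcsDg H v) 0).toNat ≤ n →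
      ∃ H a, DcsFeas G m p H a ∧ DcsMin G m p H a := by
    intro n
    induction n using Nat.strong_induction_on with
    | _ n ih =>
      intro H a hF hn
      by_cases hmin : DcsMin G m p H a
      · exact ⟨H, a, hF, hmin⟩
      · unfold DcsMin at hmin
        push Not at hmin
        obtain ⟨H', a', hF', hle, w, hw⟩ := hmin
        have hlt : ∑ v, max (a' v - dcsDg H' v) 0 < ∑ v, max (a v - dcsDg H v) 0 :=
          Finset.sum_lt_sum (fun v _ => hle v) ⟨w, Finset.mem_univ _, hw⟩
        have h0 : 0 ≤ ∑ v, max (a' v - dcsDg H' v) 0 :=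
          Finset.sum_nonneg fun v _ => le_max_right _ _
        exact ih _ (by omega) H' a' hF' le_rfl
  refine key _ ⊥ m ⟨bot_le, fun v => ⟨Or.inl rfl, ?_⟩⟩ le_rfl
  have : dcsDg (⊥ : SimpleGraph V) v = 0 := by simp [dcsDg, dcsNb]
  have := hm v
  omega

open Classical in
lemma dcs_closeA {V : Type*} [Fintype V] {G H : SimpleGraph V} {m p a : V → ℤ}
    (hF : DcsFeas G m p H a) (hM : DcsMin G m p H a) {A B : Finset V} (hg : DcsGood G H a A B)
    {v u : V} (hv : v ∈ A) (hu : u ∉ B) (h1 : G.Adj v u) (h2 : ¬ H.Adj v u) :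
    DcsGood G H a A (insert u B) := by
  obtain ⟨gA, gB, gD, sA, sB⟩ := hg
  obtain ⟨H', hH', w, hw, hd, hag⟩ := sA v hv
  have hvB : v ∉ B := fun h => by have := gA v hv; have := gB v h; omega
  have hvu : v ≠ u := h1.ne
  have hn : ¬ H'.Adj v u := by
    rw [hag v u (by tauto) (by tauto)]; exact h2
  obtain ⟨K, hK, hKd, hKa⟩ := dcs_add hH' v {u} (by simp [h1, hn])
  simp only [Finset.mem_singleton, Finset.card_singleton, Nat.cast_one] at hKd hKa
  have hKx : ∀ x, dcsDg K x = dcsDg H x + (if x = w then 1 else 0) + (if x = u then 1 else 0) := by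
    intro x
    have h3 := hKd x
    have h4 := hd x
    clear hKa hag hM hF hKd hd gA gB gD sA sB
    grind
  have hau : dcsDg H u = a u + 1 := by
    by_contra hne
    have hle : dcsDg H u ≤ a u := by have := (hF.2 u).2; omega
    have := hM K a ⟨hK, fun x => ⟨(hF.2 x).1, ?_⟩⟩ ?_ w
    · have h3 := hKx w
      clear hKa hag hM hF hKd hd gA gB gD sA sB hKx
      grind
    · have h3 := hKx x
      have h5 := (hF.2 x).2
      clear hKa hag hM hF hKd hd gA gB gD sA sB hKx
      grind
    · intro x
      have h3 := hKx x
      clear hKa hag hM hF hKd hd gA gB gD sA sB hKx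
      grind
  refine ⟨gA, ?_, gD, fun x hx => (sA x hx).mono subset_rfl (Finset.subset_insert _ _), ?_⟩
  · intro x hx
    rcases Finset.mem_insert.1 hx with rfl | hx
    · exact hau
    · exact gB x hx
  · intro x hx
    rcases Finset.mem_insert.1 hx with rfl | hx
    · refine ⟨K, hK, w, hw, ?_, ?_⟩
      · intro y
        have h3 := hKx y
        clear hKa hag hM hF hKd hd gA gB gD sA sB hKx
        grind
      · intro y z hy hz
        rw [hKa, ← hag y z (by grind) (by grind)]
        grind
    · exact (sB x hx).mono subset_rfl (Finset.subset_insert _ _)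

open Classical in
lemma dcs_closeB {V : Type*} [Fintype V] {G H : SimpleGraph V} {m p a : V → ℤ}
    (hF : DcsFeas G m p H a) (hM : DcsMin G m p H a) {A B : Finset V} (hg : DcsGood G H a A B)
    {u v : V} (hu : u ∈ B) (hv : v ∉ A) (h2 : H.Adj u v) :
    DcsGood G H a (insert v A) B := by
  obtain ⟨gA, gB, gD, sA, sB⟩ := hg
  obtain ⟨H', hH', w, hw, hd, hag⟩ := sB u hu
  have huA : u ∉ A := fun h => by have := gA u h; have := gB u hu; omega
  have hvu : u ≠ v := h2.ne
  have hn : H'.Adj u v := by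
    rw [hag u v (by tauto) (by tauto)]; exact h2
  obtain ⟨K, hK, hKd, hKa⟩ := dcs_del hH' u {v} (by simp [hn])
  simp only [Finset.mem_singleton, Finset.card_singleton, Nat.cast_one] at hKd hKa
  have hwA := gD w hw
  have hKx : ∀ x, dcsDg K x = dcsDg H x + (if x = w then 1 else 0) - (if x = v then 1 else 0) := by
    intro x
    have h3 := hKd x
    have h4 := hd x
    clear hKa hag hM hF hKd hd gA gB gD sA sB
    grind
  have hau : dcsDg H v ≤ a v := by
    by_contra hne
    have hle : dcsDg H v = a v + 1 := by have := (hF.2 v).2; omega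
    have := hM K a ⟨hK, fun x => ⟨(hF.2 x).1, ?_⟩⟩ ?_ w
    · have h3 := hKx w
      clear hKa hag hM hF hKd hd gA gB gD sA sB hKx
      grind
    · have h3 := hKx x
      have h5 := (hF.2 x).2
      clear hKa hag hM hF hKd hd gA gB gD sA sB hKx
      grind
    · intro x
      have h3 := hKx x
      clear hKa hag hM hF hKd hd gA gB gD sA sB hKx
      grind
  refine ⟨?_, gB, fun x hx => Finset.mem_insert_of_mem (gD x hx), ?_,
    fun x hx => (sB x hx).mono (Finset.subset_insert _ _) subset_rfl⟩
  · intro x hx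
    rcases Finset.mem_insert.1 hx with rfl | hx
    · exact hau
    · exact gA x hx
  · intro x hx
    rcases Finset.mem_insert.1 hx with rfl | hx
    · refine ⟨K, hK, w, hw, ?_, ?_⟩
      · intro y
        have h3 := hKx y
        clear hKa hag hM hF hKd hd gA gB gD sA sB hKx
        grind
      · intro y z hy hz
        rw [hKa, ← hag y z (by grind) (by grind)]
        grind
    · exact (sA x hx).mono (Finset.subset_insert _ _) subset_rfl

open Classical in
lemma dcs_boundA {V : Type*} [Fintype V] {G H : SimpleGraph V} {m p a : V → ℤ}
    (hF : DcsFeas G m p H a) (hM : DcsMin G m p H a) {A B : Finset V} (hg : DcsGood G H a A B)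
    {v : V} (hv : v ∈ A) (hm : 2 * m v ≤ dcsDg G v) (hmp : m v ≤ p v)
    (hp : 2 * p v ≤ dcsDg G v + m v + 2) :
    2 * (a v - dcsDg G v) + dcsNb G v B ≤ 0 := by
  obtain ⟨gA, gB, gD, sA, sB⟩ := hg
  have hc := dcsNb_compl G v B
  have hc0 := dcsNb_nonneg G v Bᶜ
  by_contra hcon
  push Not at hcon
  have hne : a v ≠ m v := by intro h; omega
  have hap : a v = p v := by have := (hF.2 v).1; tauto
  obtain ⟨H', hH', w, hw, hd, hag⟩ := sA v hv
  have hvB : v ∉ B := fun h => by have := gA v hv; have := gB v h; omega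
  have hc' := dcsNb_compl H' v B
  have hmo := dcsNb_mono hH' v Bᶜ
  have hcard := dcsNb_eq_card H' v B
  have hnn := dcsNb_nonneg H' v B
  obtain ⟨S, hS, hScard⟩ := Finset.exists_subset_card_eq
    (s := B.filter (fun w => H'.Adj v w)) (n := (dcsDg H' v - (m v + 1)).toNat) (by omega)
  obtain ⟨K, hK, hKd, -⟩ := dcs_del hH' v S (fun s hs => (Finset.mem_filter.1 (hS hs)).2)
  have hSB : ∀ s ∈ S, s ∈ B := fun s hs => (Finset.mem_filter.1 (hS hs)).1
  have hkc : (S.card : ℤ) = max (dcsDg H' v - (m v + 1)) 0 := by omega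
  rw [hkc] at hKd
  have hgv := gA v hv
  have hwB : w ∉ B := fun h => by have := gB w h; omega
  have hfv := (hF.2 v).2
  have hKv := hKd v
  have hdv := hd v
  have hvS : v ∉ S := fun h => hvB (hSB v h)
  have hKv' : dcsDg K v = min (dcsDg H' v) (m v + 1) := by
    rw [if_neg hvS, if_pos rfl] at hKv
    omega
  have hH'v : (w = v ∧ dcsDg H' v = dcsDg H v) ∨ (w ≠ v ∧ dcsDg H' v = dcsDg H v - 1) := by
    by_cases h : w = v
    · left; refine ⟨h, ?_⟩; have := hdv.2.2.2 h.symm rfl; omega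
    · right; refine ⟨h, ?_⟩; have := hdv.2.2.1 (Ne.symm h) rfl; omega
  have hKx : ∀ x, x ≠ v → dcsDg K x = dcsDg H x + (if x = w then 1 else 0)
      - (if x ∈ S then 1 else 0) := by
    intro x hx
    have h3 := hKd x
    have h4 := hd x
    grind
  clear hKd hd hdv hKv
  have hfin := hM K (fun x => if x = v then m v else a x) ⟨hK, fun x => ⟨?_, ?_⟩⟩ ?_ w
  · by_cases hwv : w = v
    · have h8 : dcsDg H' v = dcsDg H v := by tauto
      rw [hwv] at hfin hw
      simp only [if_true] at hfin
      omega
    · have := hKx w hwv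
      have hwS : w ∉ S := fun h => hwB (hSB w h)
      simp only [if_neg hwv, if_neg hwS, if_true] at this hfin
      omega
  · by_cases hx : x = v
    · subst hx; simp
    · simp only [if_neg hx]; exact (hF.2 x).1
  · by_cases hx : x = v
    · subst hx; simp only [if_true]; omega
    · have h3 := hKx x hx
      have h5 := (hF.2 x).2
      simp only [if_neg hx]
      grind
  · intro x
    by_cases hx : x = v
    · subst hx; simp only [if_true]; omega
    · have h3 := hKx x hx
      have h6 := hSB x
      have h7 := gB x
      simp only [if_neg hx]
      grind

open Classical in
lemma dcs_boundB {V : Type*} [Fintype V] {G H : SimpleGraph V} {m p a : V → ℤ}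
    (hF : DcsFeas G m p H a) (hM : DcsMin G m p H a) {A B : Finset V} (hg : DcsGood G H a A B)
    {u : V} (hu : u ∈ B) (hp1 : dcsDg G u ≤ 2 * p u + 2) (hmp : m u ≤ p u)
    (hp : p u ≤ 2 * m u + 3) :
    dcsNb G u A ≤ 2 * (a u + 1) := by
  obtain ⟨gA, gB, gD, sA, sB⟩ := hg
  have hc := dcsNb_compl G u A
  have hc0 := dcsNb_nonneg G u Aᶜ
  by_contra hcon
  push Not at hcon
  have hne : a u ≠ p u := by intro h; omega
  have hap : a u = m u := by have := (hF.2 u).1; tauto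
  obtain ⟨H', hH', w, hw, hd, hag⟩ := sB u hu
  have huA : u ∉ A := fun h => by have := gA u h; have := gB u hu; omega
  have hc' := dcsNb_compl H' u A
  have hn' := dcsNb_nonneg H' u Aᶜ
  have hgu := gB u hu
  have hwu : u ≠ w := by rintro rfl; omega
  have hH'u : dcsDg H' u = m u + 2 := by
    have := (hd u).2.2.1 hwu rfl
    omega
  have hcard : dcsNb G u A ≤ dcsNb H' u A + ((A.filter (fun w => G.Adj u w ∧ ¬ H'.Adj u w)).card : ℤ) := by
    rw [dcsNb_eq_card, dcsNb_eq_card]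
    norm_cast
    refine (Finset.card_le_card ?_).trans (Finset.card_union_le _ _)
    intro x hx
    simp only [Finset.mem_filter, Finset.mem_union] at hx ⊢
    tauto
  obtain ⟨S, hS, hScard⟩ := Finset.exists_subset_card_eq
    (s := A.filter (fun w => G.Adj u w ∧ ¬ H'.Adj u w)) (n := (p u - (m u + 2)).toNat) (by omega)
  obtain ⟨K, hK, hKd, -⟩ := dcs_add hH' u S (fun s hs => (Finset.mem_filter.1 (hS hs)).2)
  have hSA : ∀ s ∈ S, s ∈ A := fun s hs => (Finset.mem_filter.1 (hS hs)).1
  have hkc : (S.card : ℤ) = max (p u - (m u + 2)) 0 := by omega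
  rw [hkc] at hKd
  have huS : u ∉ S := fun h => huA (hSA u h)
  have hKu := hKd u
  rw [if_neg huS, if_pos rfl] at hKu
  have hKx : ∀ x, x ≠ u → dcsDg K x = dcsDg H x + (if x = w then 1 else 0)
      + (if x ∈ S then 1 else 0) := by
    intro x hx
    have h3 := hKd x
    have h4 := hd x
    grind
  clear hKd hd
  have hfin := hM K (fun x => if x = u then p u else a x) ⟨hK, fun x => ⟨?_, ?_⟩⟩ ?_ w
  · have := hKx w hwu.symm
    simp only [if_neg hwu.symm, if_true] at this hfin
    split_ifs at this <;> omega
  · by_cases hx : x = u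
    · subst hx; simp
    · simp only [if_neg hx]; exact (hF.2 x).1
  · by_cases hx : x = u
    · subst hx; simp only [if_true]; omega
    · have h3 := hKx x hx
      have h5 := (hF.2 x).2
      have h6 := hSA x
      have h7 := gA x
      simp only [if_neg hx]
      grind
  · intro x
    by_cases hx : x = u
    · subst hx; simp only [if_true]; omega
    · have h3 := hKx x hx
      simp only [if_neg hx]
      grind

/-- The four-value degree theorem. -/
theorem dcs_main {V : Type*} [Fintype V] (G : SimpleGraph V) (m p : V → ℤ)
    (h0 : ∀ v, 0 ≤ m v) (hmp : ∀ v, m v ≤ p v) (hm : ∀ v, 2 * m v ≤ dcsDg G v)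
    (hp1 : ∀ v, dcsDg G v ≤ 2 * p v + 2)
    (hp2 : ∀ v, 2 * p v ≤ dcsDg G v + m v + 2) (hp3 : ∀ v, p v ≤ 2 * m v + 3) :
    ∃ H ≤ G, ∀ v, dcsDg H v = m v ∨ dcsDg H v = m v + 1 ∨ dcsDg H v = p v ∨
      dcsDg H v = p v + 1 := by
  classical
  obtain ⟨H, a, hF, hM⟩ := dcs_exists_min G m p h0
  refine ⟨H, hF.1, ?_⟩
  suffices hall : ∀ v, a v ≤ dcsDg H v by
    intro v
    have := hall v
    have := hF.2 v
    omega
  by_contra hcon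
  push Not at hcon
  obtain ⟨w0, hw0⟩ := hcon
  have hstart : DcsGood G H a (Finset.univ.filter (fun w => dcsDg H w < a w)) ∅ := by
    refine ⟨?_, by simp, by simp, ?_, by simp⟩
    · intro v hv
      exact (Finset.mem_filter.1 hv).2.le
    · intro v hv
      refine ⟨H, hF.1, v, (Finset.mem_filter.1 hv).2, ?_, fun _ _ _ _ => Iff.rfl⟩
      intro x
      refine ⟨fun _ _ => rfl, fun h h' => absurd h h', fun h h' => absurd h' h, fun _ _ => by ring⟩
  obtain ⟨⟨A, B⟩, hAB, hmax⟩ := Finset.exists_max_image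
    (Finset.univ.filter (fun q : Finset V × Finset V => DcsGood G H a q.1 q.2))
    (fun q => q.1.card + q.2.card) ⟨(_, _), Finset.mem_filter.2 ⟨Finset.mem_univ _, hstart⟩⟩
  have hg : DcsGood G H a A B := (Finset.mem_filter.1 hAB).2
  have hmax' : ∀ A' B', DcsGood G H a A' B' → A'.card + B'.card ≤ A.card + B.card :=
    fun A' B' h => hmax (A', B') (Finset.mem_filter.2 ⟨Finset.mem_univ _, h⟩)
  have c1 : ∀ v ∈ A, ∀ u, G.Adj v u → ¬ H.Adj v u → u ∈ B := by
    intro v hv u h1 h2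
    by_contra hu
    have := hmax' _ _ (dcs_closeA hF hM hg hv hu h1 h2)
    rw [Finset.card_insert_of_notMem hu] at this
    omega
  have c2 : ∀ u ∈ B, ∀ v, H.Adj u v → v ∈ A := by
    intro u hu v h2
    by_contra hv
    have := hmax' _ _ (dcs_closeB hF hM hg hu hv h2)
    rw [Finset.card_insert_of_notMem hv] at this
    omega
  have bA := fun v (hv : v ∈ A) => dcs_boundA hF hM hg hv (hm v) (hmp v) (hp2 v)
  have bB := fun u (hu : u ∈ B) => dcs_boundB hF hM hg hu (hp1 u) (hmp u) (hp3 u)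
  obtain ⟨gA, gB, gD, -, -⟩ := hg
  have e1 : ∀ v ∈ A, dcsNb H v B = dcsDg H v - dcsDg G v + dcsNb G v B := by
    intro v hv
    have h1 := dcsNb_compl H v B
    have h2 := dcsNb_compl G v B
    have h3 : dcsNb H v Bᶜ = dcsNb G v Bᶜ := by
      unfold dcsNb
      refine Finset.sum_congr rfl fun u hu => ?_
      have : H.Adj v u ↔ G.Adj v u := ⟨fun h => hF.1 h, fun h => by
        by_contra h'
        exact (Finset.mem_compl.1 hu) (c1 v hv u h h')⟩
      simp only [this]
    omega
  have e2 : ∀ u ∈ B, dcsNb H u A = a u + 1 := by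
    intro u hu
    have h1 := dcsNb_compl H u A
    have h3 : dcsNb H u Aᶜ = 0 := by
      unfold dcsNb
      refine Finset.sum_eq_zero fun v hv => ?_
      have : ¬ H.Adj u v := fun h => (Finset.mem_compl.1 hv) (c2 u hu v h)
      simp only [this, if_false]
    have := gB u hu
    omega
  have s1 : ∑ v ∈ A, 2 * dcsNb H v B < ∑ v ∈ A, dcsNb G v B := by
    refine Finset.sum_lt_sum (fun v hv => ?_) ⟨w0, gD w0 hw0, ?_⟩
    · have := e1 v hv; have := bA v hv; have := gA v hv; omega
    · have := e1 w0 (gD w0 hw0); have := bA w0 (gD w0 hw0); omega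
  have s2 : ∑ u ∈ B, dcsNb G u A ≤ ∑ u ∈ B, 2 * dcsNb H u A := by
    refine Finset.sum_le_sum fun u hu => ?_
    have := e2 u hu; have := bB u hu; omega
  rw [← Finset.mul_sum] at s1 s2
  rw [dcsNb_comm H A B, dcsNb_comm G A B] at s1
  omega

lemma dcsDg_eq_degree {V : Type*} [Fintype V] (G : SimpleGraph V) [DecidableRel G.Adj] (v : V) :
    dcsDg G v = (G.degree v : ℤ) := by
  classical
  unfold dcsDg
  rw [dcsNb_eq_card, ← SimpleGraph.card_neighborFinset_eq_degree]
  congr 2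
  ext w
  simp

lemma dcsDg_eq_edgeDeg {V : Type*} [Fintype V] (H : SimpleGraph V) (v : V) :
    (edgeDeg H.edgeSet v : ℤ) = dcsDg H v := by
  classical
  rw [dcsDg_eq_degree, ← SimpleGraph.card_incidenceSet_eq_degree, ← Nat.card_eq_fintype_card]
  rfl

/-- Degree-constrained subgraph lemma (Addario-Berry, Dalal, McDiarmid, Reed, Thomason):
if `G` has minimum degree at least `12` and `λ_v ≥ 2` with `6λ_v ≤ d(v)` for every `v`,
then for every `t : V → ℤ` there is a spanning subgraph `H` of `G` with
`d_H(v) ∈ [d(v)/3, 2d(v)/3]` and `d_H(v) ≡ t(v)` or `t(v)+1 (mod λ_v)` for each `v`. -/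
theorem degree_constrained_subgraph
    {V : Type*} [Fintype V] (G : SimpleGraph V) [DecidableRel G.Adj]
    (hmin : ∀ v : V, 12 ≤ G.degree v)
    (lam : V → ℤ) (hlam2 : ∀ v, 2 ≤ lam v)
    (hlam6 : ∀ v, 6 * lam v ≤ (G.degree v : ℤ))
    (t : V → ℤ) :
    ∃ E' ⊆ G.edgeSet, ∀ v : V,
      ((G.degree v : ℝ) / 3 ≤ (edgeDeg E' v : ℝ) ∧
        (edgeDeg E' v : ℝ) ≤ 2 * (G.degree v : ℝ) / 3) ∧
      (Int.ModEq (lam v) (edgeDeg E' v : ℤ) (t v) ∨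
        Int.ModEq (lam v) (edgeDeg E' v : ℤ) (t v + 1)) := by
  choose m hm using fun v => show ∃ x : ℤ, Int.ModEq (lam v) x (t v) ∧ 2 * x ≤ (G.degree v : ℤ) ∧
      (G.degree v : ℤ) < 2 * x + 2 * lam v from by
    have hl := hlam2 v
    have h1 := Int.emod_nonneg ((G.degree v : ℤ) / 2 - t v) (by omega : lam v ≠ 0)
    have h2 := Int.emod_lt_of_pos ((G.degree v : ℤ) / 2 - t v) (by omega : 0 < lam v)
    have h3 := Int.emod_add_mul_ediv ((G.degree v : ℤ) / 2 - t v) (lam v)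
    refine ⟨(G.degree v : ℤ) / 2 - ((G.degree v : ℤ) / 2 - t v) % lam v, ?_, by omega, by omega⟩
    refine (Int.modEq_iff_dvd.2 ⟨-(((G.degree v : ℤ) / 2 - t v) / lam v), ?_⟩)
    linarith
  obtain ⟨H, hH, hd⟩ := dcs_main G m
    (fun v => if (G.degree v : ℤ) ≤ 2 * m v + 2 then m v else m v + lam v)
    (fun v => by have := hm v; have := hlam6 v; omega)
    (fun v => by have := hlam2 v; split_ifs <;> omega)
    (fun v => by have := hm v; rw [dcsDg_eq_degree]; omega)
    (fun v => by have := hm v; rw [dcsDg_eq_degree]; split_ifs <;> omega)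
    (fun v => by
      have := hm v; have := hlam6 v; have := hlam2 v
      rw [dcsDg_eq_degree]; split_ifs <;> omega)
    (fun v => by
      have := hm v; have := hlam6 v; have := hlam2 v
      split_ifs <;> omega)
  refine ⟨H.edgeSet, SimpleGraph.edgeSet_mono hH, fun v => ?_⟩
  have hv := hd v
  rw [← dcsDg_eq_edgeDeg] at hv
  obtain ⟨m1, m2, m3⟩ := hm v
  have l2 := hlam2 v
  have l6 := hlam6 v
  have hmv := hmin v
  have m1' : Int.ModEq (lam v) (m v + lam v) (t v) := by
    simpa using m1.add (show Int.ModEq (lam v) (lam v) 0 by simp [Int.ModEq])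
  refine ⟨?_, ?_⟩
  · have hb : (G.degree v : ℤ) ≤ 3 * (edgeDeg H.edgeSet v : ℤ) ∧
        3 * (edgeDeg H.edgeSet v : ℤ) ≤ 2 * (G.degree v : ℤ) := by
      split_ifs at hv <;> omega
    obtain ⟨b1, b2⟩ := hb
    have b1' : (G.degree v : ℝ) ≤ 3 * (edgeDeg H.edgeSet v : ℝ) := by exact_mod_cast b1
    have b2' : 3 * (edgeDeg H.edgeSet v : ℝ) ≤ 2 * (G.degree v : ℝ) := by exact_mod_cast b2
    constructor <;> linarith
  · split_ifs at hv <;> rcases hv with hv | hv | hv | hv <;> rw [hv] <;>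
      first
      | exact Or.inl m1
      | exact Or.inl m1'
      | exact Or.inr (m1.add_right 1)
      | exact Or.inr (m1'.add_right 1)
end

section
/- Let G=(V,E) be a d-regular finite simple graph with d ≥ 54000, let k = 0.025, s = 0.0031, r = 0.26, u = 0.131, and let K = ⌈kd⌉. Then there exists an assignment of colours C_v = (O_v, I_v) ∈ [K]² to the vertices v ∈ V such that, with U = {v ∈ V : ∃ w adjacent to v with C_w = C_v}, T = {vw ∈ E : v ∈ U or w ∈ U}, S = {vw ∈ E \ T : O_v = O_w or I_v = I_w}, and R = {vw ∈ E \ T : 1 ≤ |O_v − O_w|_K ≤ (sd+7)/2 or 1 ≤ |I_v − I_w|_K ≤ (sd+7)/2}, every vertex v ∈ V satisfies: (i) the number of edges of S incident with v is less than sd; (ii) the number of edges of R incident with v is less than rd; (iii) the number of neighbours of v lying in U is less than ud. -/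
/-- The distance modulo `K` between two integers:
`|m − n|_K = min(m − n mod K, n − m mod K)`. -/
def modDist (K : ℕ) (m n : ℤ) : ℤ :=
  min ((m - n) % (K : ℤ)) ((n - m) % (K : ℤ))

/-- The set `U` of vertices to be uncoloured: vertices having a neighbour
with the same colour. -/
def uncolSet {V : Type*} (G : SimpleGraph V) (C : V → ℕ × ℕ) : Set V :=
  {v | ∃ w, G.Adj v w ∧ C w = C v}

/-- The set `T` of edges touching `U`. -/
def touchSet {V : Type*} (G : SimpleGraph V) (C : V → ℕ × ℕ) : Set (Sym2 V) :=
  {e | e ∈ G.edgeSet ∧ ∃ v w : V, e = s(v, w) ∧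
    (v ∈ uncolSet G C ∨ w ∈ uncolSet G C)}

/-- The set `S` of special edges: edges outside `T` whose ends agree
on one of the two coordinates of their colours. -/
def specialSet {V : Type*} (G : SimpleGraph V) (C : V → ℕ × ℕ) : Set (Sym2 V) :=
  {e | e ∈ G.edgeSet \ touchSet G C ∧ ∃ v w : V, e = s(v, w) ∧
    ((C v).1 = (C w).1 ∨ (C v).2 = (C w).2)}

/-- The set `R` of risky edges: edges outside `T` whose ends have, in one of the two
coordinates, colours at distance modulo `K` between `1` and the bound `b`. -/
def riskySet {V : Type*} (G : SimpleGraph V) (C : V → ℕ × ℕ) (K : ℕ) (b : ℝ) :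
    Set (Sym2 V) :=
  {e | e ∈ G.edgeSet \ touchSet G C ∧ ∃ v w : V, e = s(v, w) ∧
    ((1 ≤ modDist K ((C v).1) ((C w).1) ∧ (modDist K ((C v).1) ((C w).1) : ℝ) ≤ b) ∨
     (1 ≤ modDist K ((C v).2) ((C w).2) ∧ (modDist K ((C v).2) ((C w).2) : ℝ) ≤ b))}

open Classical in
/-- Number of colourings satisfying `P`, as a real. -/
noncomputable def cnt {V α : Type*} [Fintype V] [Fintype α] (P : (V → α) → Prop) : ℝ :=
  ((Finset.univ.filter P).card : ℝ)

section generic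
open Classical
variable {V α I : Type*} [Fintype V] [Fintype α]

lemma cnt_nonneg (P : (V → α) → Prop) : 0 ≤ cnt P := by unfold cnt; positivity

lemma cnt_mono {P Q : (V → α) → Prop} (h : ∀ C, P C → Q C) : cnt P ≤ cnt Q := by
  unfold cnt
  exact_mod_cast Finset.card_le_card (Finset.monotone_filter_right _ (fun C _ => h C))

lemma cnt_or {P Q : (V → α) → Prop} : cnt (fun C => P C ∨ Q C) ≤ cnt P + cnt Q := by
  unfold cnt
  rw [← Nat.cast_add, Nat.cast_le]
  refine le_trans (Finset.card_le_card ?_) (Finset.card_union_le _ _)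
  intro C hC
  simpa using hC

lemma cnt_split (P Q : (V → α) → Prop) :
    cnt P = cnt (fun C => Q C ∧ P C) + cnt (fun C => ¬ Q C ∧ P C) := by
  unfold cnt
  rw [← Nat.cast_add, ← Finset.card_filter_add_card_filter_not (s := Finset.univ.filter P) Q]
  simp only [Finset.filter_filter, and_comm]

lemma cnt_indep (D : Finset V) (P Q : (V → α) → Prop)
    (hP : ∀ C C', (∀ x ∈ D, C x = C' x) → P C → P C')
    (hQ : ∀ C C', (∀ x ∉ D, C x = C' x) → Q C → Q C') :
    cnt (fun C => P C ∧ Q C) * cnt (fun _ : V → α => True) = cnt P * cnt Q := by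
  unfold cnt
  rw [← Nat.cast_mul, ← Nat.cast_mul, ← Finset.card_product, ← Finset.card_product]
  congr 1
  set φ : (V → α) × (V → α) → (V → α) × (V → α) := fun X =>
    (fun x => if x ∈ D then X.1 x else X.2 x, fun x => if x ∈ D then X.2 x else X.1 x) with hφ
  have inv : ∀ X, φ (φ X) = X := by
    intro X
    ext x <;> simp only [hφ] <;> split_ifs <;> rfl
  apply Finset.card_nbij' φ φ
  · rintro ⟨C, C'⟩ h
    simp at h ⊢
    refine ⟨hP C _ ?_ h.1, hQ C _ ?_ h.2⟩
    · intro x hx; simp [hφ, hx]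
    · intro x hx; simp [hφ, hx]
  · rintro ⟨C, C'⟩ h
    simp at h ⊢
    refine ⟨hP C _ ?_ h.1, hQ C' _ ?_ h.2⟩
    · intro x hx; simp [hφ, hx]
    · intro x hx; simp [hφ, hx]
  · intro X _; exact inv X
  · intro X _; exact inv X

lemma cnt_union_bound (A : I → (V → α) → Prop) (Q : (V → α) → Prop) (S : Finset I) :
    cnt (fun C => (∃ j ∈ S, A j C) ∧ Q C) ≤ ∑ j ∈ S, cnt (fun C => A j C ∧ Q C) := by
  induction S using Finset.induction_on with
  | empty => simp [cnt]
  | insert a s ha ih =>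
    rw [Finset.sum_insert ha]
    refine le_trans ?_ (add_le_add le_rfl ih)
    refine le_trans (cnt_mono ?_) cnt_or
    rintro C ⟨⟨j, hj, hA⟩, hQ⟩
    rcases Finset.mem_insert.1 hj with rfl | hj
    · exact Or.inl ⟨hA, hQ⟩
    · exact Or.inr ⟨⟨j, hj, hA⟩, hQ⟩

lemma cnt_univ_pos [Nonempty α] : 0 < cnt (fun _ : V → α => True) := by
  unfold cnt
  rw [Nat.cast_pos]
  apply Finset.card_pos.2
  obtain ⟨a⟩ := ‹Nonempty α›
  exact ⟨fun _ => a, by simp⟩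

theorem lll [Fintype I] [Nonempty α] (D : I → Finset V) (A : I → (V → α) → Prop)
    (hD : ∀ i C C', (∀ x ∈ D i, C x = C' x) → A i C → A i C')
    (p : I → ℝ) (hp : ∀ i, 0 ≤ p i) (hp4 : ∀ i, p i ≤ 1 / 4)
    (hA : ∀ i, cnt (A i) ≤ p i * cnt (fun _ : V → α => True))
    (hsum : ∀ i, ∑ j ∈ Finset.univ.filter (fun j => ¬ Disjoint (D i) (D j)), p j ≤ 1 / 4) :
    ∃ C, ∀ i, ¬ A i C := by
  have key : ∀ n : ℕ, ∀ S : Finset I, S.card = n → ∀ i,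
      cnt (fun C => A i C ∧ ∀ j ∈ S, ¬ A j C) ≤ 2 * p i * cnt (fun C => ∀ j ∈ S, ¬ A j C) := by
    intro n
    induction n using Nat.strong_induction_on with
    | _ n ih =>
    intro S hS i
    set S1 := S.filter (fun j => ¬ Disjoint (D i) (D j)) with hS1
    set S2 := S.filter (fun j => Disjoint (D i) (D j)) with hS2
    set Q2 : (V → α) → Prop := fun C => ∀ j ∈ S2, ¬ A j C with hQ2
    have h1 : cnt (fun C => A i C ∧ Q2 C) ≤ p i * cnt Q2 := by
      have := cnt_indep (D i) (A i) Q2 (hD i) (by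
        intro C C' h hQ j hj hA
        refine hQ j hj (hD j C' C ?_ hA)
        intro x hx
        refine (h x ?_).symm
        intro hx'
        exact Finset.disjoint_left.1 (Finset.mem_filter.1 hj).2 hx' hx)
      have h2 : cnt (A i) * cnt Q2 ≤ p i * cnt (fun _ : V → α => True) * cnt Q2 :=
        mul_le_mul_of_nonneg_right (hA i) (cnt_nonneg _)
      have h3 : 0 < cnt (fun _ : V → α => True) := cnt_univ_pos
      rw [← this] at h2
      have : cnt (fun C => A i C ∧ Q2 C) * cnt (fun _ : V → α => True) ≤
        (p i * cnt Q2) * cnt (fun _ : V → α => True) := by linarith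
      exact le_of_mul_le_mul_right this h3
    have h0 : cnt (fun C => A i C ∧ ∀ j ∈ S, ¬ A j C) ≤ cnt (fun C => A i C ∧ Q2 C) :=
      cnt_mono (fun C h => ⟨h.1, fun j hj => h.2 j (Finset.mem_filter.1 hj).1⟩)
    have h4 : cnt Q2 ≤ 2 * cnt (fun C => ∀ j ∈ S, ¬ A j C) := by
      by_cases he : S1 = ∅
      · have : cnt Q2 ≤ cnt (fun C => ∀ j ∈ S, ¬ A j C) := by
          apply cnt_mono
          intro C h j hj
          apply h j
          rw [hS2, Finset.mem_filter]
          refine ⟨hj, ?_⟩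
          by_contra hc
          have : j ∈ S1 := Finset.mem_filter.2 ⟨hj, hc⟩
          simp [he] at this
        have := cnt_nonneg (fun C : V → α => ∀ j ∈ S, ¬ A j C)
        linarith
      · have hlt : S2.card < n := by
          have := Finset.card_filter_add_card_filter_not (s := S) (fun j => Disjoint (D i) (D j))
          have h5 : 0 < S1.card := Finset.card_pos.2 (Finset.nonempty_iff_ne_empty.2 he)
          have e1 : (S.filter (fun j => Disjoint (D i) (D j))).card = S2.card := by
            rw [hS2]
          have e2 : (S.filter (fun j => ¬ Disjoint (D i) (D j))).card = S1.card := by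
            rw [hS1]
          have e3 : S2.card + S1.card = S.card := by
            rw [← e1, ← e2]
            convert this
          omega
        have h5 := cnt_split Q2 (fun C => ∃ j ∈ S1, A j C)
        have h6 := cnt_union_bound A Q2 S1
        have h7 : ∑ j ∈ S1, cnt (fun C => A j C ∧ Q2 C) ≤ ∑ j ∈ S1, 2 * p j * cnt Q2 :=
          Finset.sum_le_sum (fun j _ => ih _ hlt S2 rfl j)
        have h8 : ∑ j ∈ S1, p j ≤ 1 / 4 := by
          refine le_trans (Finset.sum_le_sum_of_subset_of_nonneg ?_ (fun j _ _ => hp j)) (hsum i)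
          intro j hj
          exact Finset.mem_filter.2 ⟨Finset.mem_univ _, (Finset.mem_filter.1 hj).2⟩
        have h9 : ∑ j ∈ S1, 2 * p j * cnt Q2 ≤ 1 / 2 * cnt Q2 := by
          rw [← Finset.sum_mul, ← Finset.mul_sum]
          apply mul_le_mul_of_nonneg_right _ (cnt_nonneg _)
          linarith
        have h10 : cnt (fun C => ¬ (∃ j ∈ S1, A j C) ∧ Q2 C) ≤ cnt (fun C => ∀ j ∈ S, ¬ A j C) := by
          apply cnt_mono
          rintro C ⟨ha, hb⟩ j hj hc
          by_cases hd : Disjoint (D i) (D j)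
          · exact hb j (Finset.mem_filter.2 ⟨hj, hd⟩) hc
          · exact ha ⟨j, Finset.mem_filter.2 ⟨hj, hd⟩, hc⟩
        linarith
    have h11 := mul_le_mul_of_nonneg_left h4 (hp i)
    linarith
  have pos : ∀ S : Finset I, 0 < cnt (fun C => ∀ j ∈ S, ¬ A j C) := by
    intro S
    induction S using Finset.induction_on with
    | empty => simpa using cnt_univ_pos (V := V) (α := α)
    | insert a s ha ih =>
      have h1 := key _ s rfl a
      have h2 := cnt_split (fun C => ∀ j ∈ s, ¬ A j C) (A a)
      have h3 : cnt (fun C => ¬ A a C ∧ ∀ j ∈ s, ¬ A j C) ≤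
          cnt (fun C => ∀ j ∈ insert a s, ¬ A j C) := by
        apply cnt_mono
        rintro C ⟨ha, hb⟩ j hj
        rcases Finset.mem_insert.1 hj with rfl | hj
        · exact ha
        · exact hb j hj
      have h4 := mul_le_mul_of_nonneg_right (hp4 a) ih.le
      linarith
  have := pos Finset.univ
  unfold cnt at this
  rw [Nat.cast_pos] at this
  obtain ⟨C, hC⟩ := Finset.card_pos.1 this
  exact ⟨C, by simpa using hC⟩

/-- averaging over one coordinate -/
lemma sum_update (w : V) (F : (V → α) → ℝ) :
    ∑ C, ∑ a, F (Function.update C w a) = Fintype.card α * ∑ C, F C := by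
  have : ∀ C : V → α, (Fintype.card α : ℝ) * F C = ∑ _a : α, F C := by
    intro C; simp
  rw [Finset.mul_sum]
  simp_rw [this]
  rw [← Finset.sum_product', ← Finset.sum_product']
  apply Finset.sum_nbij' (fun X : (V → α) × α => (Function.update X.1 w X.2, X.1 w))
    (fun X : (V → α) × α => (Function.update X.1 w X.2, X.1 w))
  all_goals simp

lemma seq_mgf (e : V → ℕ) (g : V → (V → α) → ℝ) (M : ℝ) (hM : 0 ≤ M)
    (hg0 : ∀ w C, 0 ≤ g w C) (he : Function.Injective e) (W : Finset V)
    (hg : ∀ w ∈ W, ∀ w' ∈ W, e w < e w' → ∀ C a, g w (Function.update C w' a) = g w C)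
    (hs : ∀ w ∈ W, ∀ C, ∑ a, g w (Function.update C w a) ≤ M * Fintype.card α) [Nonempty α] :
    ∑ C, ∏ w ∈ W, g w C ≤ M ^ W.card * cnt (fun _ : V → α => True) := by
  induction W using Finset.induction_on_max_value e with
  | empty => simp [cnt]
  | insert a s ha hmax ih =>
    have ih' := ih (fun w hw w' hw' => hg w (by simp [hw]) w' (by simp [hw']))
      (fun w hw => hs w (by simp [hw]))
    have hα : (0 : ℝ) < Fintype.card α := by exact_mod_cast Fintype.card_pos
    have h1 := sum_update a (fun C => ∏ w ∈ insert a s, g w C)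
    have h2 : ∑ C, ∑ b, ∏ w ∈ insert a s, g w (Function.update C a b) ≤
        ∑ C, (M * Fintype.card α) * ∏ w ∈ s, g w C := by
      apply Finset.sum_le_sum
      intro C _
      have : ∀ b, ∏ w ∈ insert a s, g w (Function.update C a b) =
          g a (Function.update C a b) * ∏ w ∈ s, g w C := by
        intro b
        rw [Finset.prod_insert ha]
        congr 1
        apply Finset.prod_congr rfl
        intro w hw
        apply hg w (by simp [hw]) a (by simp)
        refine lt_of_le_of_ne (hmax w hw) ?_
        intro h
        exact ha (he h ▸ hw)
      simp_rw [this]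
      rw [← Finset.sum_mul]
      exact mul_le_mul_of_nonneg_right (hs a (by simp) C) (Finset.prod_nonneg (fun w _ => hg0 w C))
    rw [h1, ← Finset.mul_sum] at h2
    have h3 : ∑ C, ∏ w ∈ insert a s, g w C ≤ M * ∑ C, ∏ w ∈ s, g w C := by
      refine le_of_mul_le_mul_left ?_ hα
      linarith
    rw [Finset.card_insert_of_notMem ha, pow_succ]
    have := mul_le_mul_of_nonneg_left ih' hM
    linarith

/-- Markov -/
lemma cnt_le_of_prod (e : V → ℕ) (g : V → (V → α) → ℝ) (M : ℝ) (hM : 0 ≤ M)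
    (hg0 : ∀ w C, 0 ≤ g w C) (he : Function.Injective e) (W : Finset V)
    (hg : ∀ w ∈ W, ∀ w' ∈ W, e w < e w' → ∀ C a, g w (Function.update C w' a) = g w C)
    (hs : ∀ w ∈ W, ∀ C, ∑ a, g w (Function.update C w a) ≤ M * Fintype.card α) [Nonempty α]
    (P : (V → α) → Prop) (x : ℝ) (hP : ∀ C, P C → Real.exp x ≤ ∏ w ∈ W, g w C) :
    cnt P ≤ Real.exp (-x) * M ^ W.card * cnt (fun _ : V → α => True) := by
  have h1 := seq_mgf e g M hM hg0 he W hg hs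
  have h2 : Real.exp x * cnt P ≤ ∑ C, ∏ w ∈ W, g w C := by
    unfold cnt
    rw [mul_comm, ← nsmul_eq_mul, ← Finset.sum_const]
    refine le_trans (Finset.sum_le_sum (fun C hC => hP C (Finset.mem_filter.1 hC).2)) ?_
    exact Finset.sum_le_sum_of_subset_of_nonneg (Finset.filter_subset _ _)
      (fun C _ _ => Finset.prod_nonneg (fun w _ => hg0 w C))
  have h3 : cnt P = Real.exp (-x) * (Real.exp x * cnt P) := by
    rw [← mul_assoc, ← Real.exp_add]; simp
  rw [h3, mul_assoc]
  exact mul_le_mul_of_nonneg_left (h2.trans h1) (Real.exp_pos _).le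

end generic
section graph
open Classical
variable {V α : Type*} [Fintype V] [Fintype α]

lemma exists_rank : ∃ e : V → ℕ, Function.Injective e :=
  ⟨fun v => (Fintype.equivFin V v : ℕ), fun a b h => (Fintype.equivFin V).injective (Fin.ext h)⟩

lemma prob_indep [Nonempty α] (v : V) (W : Finset V) (hv : v ∉ W) (bad : α → α → Prop)
    (t : ℝ) (ht : 0 ≤ t) (m : ℝ) (hm0 : 0 ≤ m)
    (hm : ∀ c, ((Finset.univ.filter (fun a => bad c a)).card : ℝ) ≤ m * Fintype.card α) (τ : ℝ) :
    cnt (fun C : V → α => τ ≤ ((W.filter (fun w => bad (C v) (C w))).card : ℝ)) ≤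
      Real.exp (-(t * τ)) * (1 + m * (Real.exp t - 1)) ^ W.card * cnt (fun _ : V → α => True) := by
  obtain ⟨e, he⟩ := exists_rank (V := V)
  have hexp : 0 ≤ Real.exp t - 1 := by
    have := Real.add_one_le_exp t
    linarith
  apply cnt_le_of_prod e (fun w C => if bad (C v) (C w) then Real.exp t else 1) _ (by positivity)
    (by intro w C; split_ifs <;> positivity) he
  · intro w hw w' hw' hlt C a
    have h1 : v ≠ w' := by rintro rfl; exact hv hw'
    have h2 : w ≠ w' := by rintro rfl; exact lt_irrefl _ hlt
    simp [Function.update_of_ne h1, Function.update_of_ne h2]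
  · intro w hw C
    have h1 : v ≠ w := by rintro rfl; exact hv hw
    simp only [Function.update_of_ne h1, Function.update_self]
    have : ∀ a, (if bad (C v) a then Real.exp t else 1) =
        1 + (Real.exp t - 1) * (if bad (C v) a then 1 else 0) := by
      intro a; split_ifs <;> ring
    simp_rw [this]
    rw [Finset.sum_add_distrib, ← Finset.mul_sum, Finset.sum_boole]
    have h2 := mul_le_mul_of_nonneg_left (hm (C v)) hexp
    simp only [Finset.sum_const, Finset.card_univ, nsmul_eq_mul, mul_one]
    linarith
  · intro C hC
    rw [Finset.prod_ite, Finset.prod_const, Finset.prod_const_one, mul_one, ← Real.exp_nat_mul]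
    apply Real.exp_le_exp.2
    rw [mul_comm]
    exact mul_le_mul_of_nonneg_right hC ht

lemma ucount (G : SimpleGraph V) (N : Finset V) (e : V → ℕ) (he : Function.Injective e)
    (C : V → α) :
    (N.filter (fun w => ∃ x, G.Adj w x ∧ C x = C w)).card ≤
      (N.filter (fun w => ∃ x, x ∉ N ∧ G.Adj w x ∧ C x = C w)).card +
      2 * (N.filter (fun w => ∃ x ∈ N, e x < e w ∧ C x = C w)).card - 
      ((N.filter (fun w => ∃ x ∈ N, e x < e w ∧ C x = C w)).filter 
        (fun w => ∃ x, x ∉ N ∧ G.Adj w x ∧ C x = C w)).card := by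
  set A : V → Prop := fun w => ∃ x, x ∉ N ∧ G.Adj w x ∧ C x = C w with hA
  set B : V → Prop := fun w => ∃ x ∈ N, e x < e w ∧ C x = C w with hB
  set F : V → Prop := fun w => ¬ B w ∧ ∃ x ∈ N, e w < e x ∧ C x = C w with hF
  have hFB : (N.filter F).card ≤ (N.filter B).card := by
    have : ∀ w, ∃ x, F w → (x ∈ N ∧ e w < e x ∧ C x = C w) := by
      intro w
      by_cases h : F w
      · obtain ⟨x, hx⟩ := h.2
        exact ⟨x, fun _ => hx⟩
      · exact ⟨w, fun h' => absurd h' h⟩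
    choose f hf using this
    apply Finset.card_le_card_of_injOn f
    · intro w hw
      have hw' := Finset.mem_filter.1 hw
      have := hf w hw'.2
      exact Finset.mem_filter.2 ⟨this.1, w, hw'.1, this.2.1, this.2.2.symm⟩
    · intro w hw w' hw' hff
      have hw := Finset.mem_filter.1 hw
      have hw' := Finset.mem_filter.1 hw'
      have h1 := hf w hw.2
      have h2 := hf w' hw'.2
      have hc : C w = C w' := by rw [← h1.2.2, ← h2.2.2, hff]
      rcases lt_trichotomy (e w) (e w') with h | h | h
      · exact absurd ⟨w, hw.1, h, hc⟩ hw'.2.1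
      · exact he h
      · exact absurd ⟨w', hw'.1, h, hc.symm⟩ hw.2.1
  have hsub : N.filter (fun w => ∃ x, G.Adj w x ∧ C x = C w) ⊆
      ((N.filter A) ∪ (N.filter B)) ∪ N.filter F := by
    intro w hw
    obtain ⟨hwN, x, hadj, hx⟩ := Finset.mem_filter.1 hw
    simp only [Finset.mem_union, Finset.mem_filter]
    by_cases hxN : x ∈ N
    · rcases lt_trichotomy (e x) (e w) with h | h | h
      · exact Or.inl (Or.inr ⟨hwN, x, hxN, h, hx⟩)
      · exact absurd (he h) hadj.ne'
      · by_cases hb : B w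
        · exact Or.inl (Or.inr ⟨hwN, hb⟩)
        · exact Or.inr ⟨hwN, hb, x, hxN, h, hx⟩
    · exact Or.inl (Or.inl ⟨hwN, x, hxN, hadj, hx⟩)
  have h1 := Finset.card_le_card hsub
  have h2 := Finset.card_union_le (N.filter A ∪ N.filter B) (N.filter F)
  have h3 := Finset.card_union_add_card_inter (N.filter A) (N.filter B)
  have h4 : (N.filter A) ∩ (N.filter B) = (N.filter B).filter A := by
    ext w; simp only [Finset.mem_inter, Finset.mem_filter]; tauto
  rw [h4] at h3
  change _ ≤ (N.filter A).card + 2 * (N.filter B).card - ((N.filter B).filter A).card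
  omega

lemma prob_U [Nonempty α] (G : SimpleGraph V) (d : ℕ)
    (hdeg : ∀ w, (Finset.univ.filter (fun x => G.Adj w x)).card = d)
    (N : Finset V) (hN : N.card = d) (q : ℝ) (hq : (d : ℝ) ≤ q * Fintype.card α) (τ : ℝ) :
    cnt (fun C : V → α => τ ≤ ((N.filter (fun w => ∃ x, G.Adj w x ∧ C x = C w)).card : ℝ)) ≤
      Real.exp (-(1 / 5 * τ)) * (1 + 3 / 4 * q) ^ d * cnt (fun _ : V → α => True) := by
  obtain ⟨e, he⟩ := exists_rank (V := V)
  have hα : (0 : ℝ) < Fintype.card α := by exact_mod_cast Fintype.card_pos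
  have hq0 : 0 ≤ q := by
    by_contra h
    have : q * Fintype.card α < 0 := mul_neg_of_neg_of_pos (not_le.1 h) hα
    have : (0 : ℝ) ≤ d := by positivity
    linarith
  have hexp1 : Real.exp (1 / 5) ≤ 5 / 4 := by
    have := Real.exp_bound' (x := 1 / 5) (by norm_num) (by norm_num) (n := 3) (by norm_num)
    refine this.trans ?_
    norm_num [Finset.sum_range_succ, Nat.factorial]
  have hexp2 : Real.exp (2 / 5) ≤ 3 / 2 := by
    have := Real.exp_bound' (x := 2 / 5) (by norm_num) (by norm_num) (n := 4) (by norm_num)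
    refine this.trans ?_
    norm_num [Finset.sum_range_succ, Nat.factorial]
  set A : V → (V → α) → Prop := fun w C => ∃ x, x ∉ N ∧ G.Adj w x ∧ C x = C w with hA
  set B : V → (V → α) → Prop := fun w C => ∃ x ∈ N, e x < e w ∧ C x = C w with hB
  rw [← hN]
  apply cnt_le_of_prod e (fun w C => 1 + (if A w C then 1 / 4 else 0) +
    (if B w C then 1 / 2 else 0)) _ (by positivity)
    (by intro w C; split_ifs <;> positivity) he
  · intro w hw w' hw' hlt C a
    have h2 : w ≠ w' := by rintro rfl; exact lt_irrefl _ hlt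
    have hAe : A w (Function.update C w' a) ↔ A w C := by
      simp only [hA]
      apply exists_congr
      intro x
      by_cases hx : x ∈ N
      · simp [hx]
      · have : x ≠ w' := by rintro rfl; exact hx hw'
        simp [Function.update_of_ne h2, Function.update_of_ne this]
    have hBe : B w (Function.update C w' a) ↔ B w C := by
      simp only [hB]
      apply exists_congr
      intro x
      by_cases hx : x = w'
      · subst hx
        simp [hlt.not_gt]
      · simp [Function.update_of_ne h2, Function.update_of_ne hx]
    simp only [hAe, hBe]
  · intro w hw C
    have hAc : ((Finset.univ.filter (fun a => A w (Function.update C w a))).card : ℝ) ≤ d := by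
      rw [← hdeg w, Nat.cast_le]
      refine le_trans (Finset.card_le_card ?_)
        (Finset.card_image_le (s := Finset.univ.filter (fun x => G.Adj w x)) (f := C))
      intro a ha
      obtain ⟨x, hx, hadj, hxa⟩ := (Finset.mem_filter.1 ha).2
      rw [Function.update_of_ne hadj.ne', Function.update_self] at hxa
      exact Finset.mem_image.2 ⟨x, by simpa using hadj, hxa⟩
    have hBc : ((Finset.univ.filter (fun a => B w (Function.update C w a))).card : ℝ) ≤ d := by
      rw [← hN, Nat.cast_le]
      refine le_trans (Finset.card_le_card ?_) (Finset.card_image_le (s := N) (f := C))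
      intro a ha
      obtain ⟨x, hx, hlt, hxa⟩ := (Finset.mem_filter.1 ha).2
      have : x ≠ w := by rintro rfl; exact lt_irrefl _ hlt
      rw [Function.update_of_ne this, Function.update_self] at hxa
      exact Finset.mem_image.2 ⟨x, hx, hxa⟩
    rw [Finset.sum_add_distrib, Finset.sum_add_distrib, ← Finset.sum_filter, ← Finset.sum_filter]
    simp only [Finset.sum_const, Finset.card_univ, nsmul_eq_mul, mul_one]
    linarith
  · intro C hC
    have h1 := ucount G N e he C
    have h2 : Real.exp (1 / 5 * τ) ≤ ∏ w ∈ N,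
        (if B w C then Real.exp (2 / 5) else if A w C then Real.exp (1 / 5) else 1) := by
      rw [Finset.prod_ite, Finset.prod_ite, Finset.prod_const, Finset.prod_const,
        Finset.prod_const_one, mul_one, ← Real.exp_nat_mul, ← Real.exp_nat_mul, ← Real.exp_add]
      apply Real.exp_le_exp.2
      have h5 : ((N.filter (fun w => B w C)).filter (fun w => A w C)).card +
          ((N.filter (fun w => ¬ B w C)).filter (fun w => A w C)).card =
          (N.filter (fun w => A w C)).card := by
        rw [Finset.filter_filter, Finset.filter_filter,
          ← Finset.card_filter_add_card_filter_not (s := N.filter (fun w => A w C))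
            (fun w => B w C), Finset.filter_filter, Finset.filter_filter]
        simp only [and_comm]
      have h6 : (N.filter (fun w => ∃ x, G.Adj w x ∧ C x = C w)).card ≤
          2 * (N.filter (fun w => B w C)).card +
          ((N.filter (fun w => ¬ B w C)).filter (fun w => A w C)).card := by
        simp only [hA, hB] at h5 ⊢
        omega
      have h7 : ((N.filter (fun w => ∃ x, G.Adj w x ∧ C x = C w)).card : ℝ) ≤
          2 * (N.filter (fun w => B w C)).card +
          ((N.filter (fun w => ¬ B w C)).filter (fun w => A w C)).card := by
        exact_mod_cast h6
      linarith
    refine h2.trans (Finset.prod_le_prod ?_ ?_)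
    · intro w _; split_ifs <;> positivity
    · intro w _; split_ifs <;> linarith

lemma edgeDeg_le (G : SimpleGraph V) (E' : Set (Sym2 V)) (hE : E' ⊆ G.edgeSet)
    (r : V → V → Prop) (hr : ∀ a b, r a b → r b a)
    (h : ∀ e ∈ E', ∃ a b, e = s(a, b) ∧ r a b) (v : V) :
    edgeDeg E' v ≤ ((Finset.univ.filter (fun w => G.Adj v w)).filter (fun w => r v w)).card := by
  unfold edgeDeg
  rw [← Set.ncard_coe_finset]
  refine le_trans (Set.ncard_le_ncard ?_ (Set.toFinite _)) (Set.ncard_image_le (Set.toFinite _)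
    (f := fun w => s(v, w)))
  rintro e ⟨he, hve⟩
  obtain ⟨a, b, rfl, hab⟩ := h e he
  have hadj : G.Adj a b := hE he
  rcases Sym2.mem_iff.1 hve with rfl | rfl
  · exact ⟨b, by simp [hadj, hab], rfl⟩
  · exact ⟨a, by simp [hadj.symm, hr _ _ hab], Sym2.eq_swap⟩

end graph

section colours
open Classical

def isNear (K : ℕ) (b : ℝ) (m n : ℤ) : Prop :=
  1 ≤ modDist K m n ∧ (modDist K m n : ℝ) ≤ b

lemma isNear_symm {K : ℕ} {b : ℝ} {m n : ℤ} (h : isNear K b m n) : isNear K b n m := by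
  unfold isNear modDist at *
  rwa [min_comm]

lemma near_card (K : ℕ) (b : ℝ) (hb : 0 ≤ b) (m : Fin K) :
    ((Finset.univ.filter (fun a : Fin K =>
      isNear K b (((m : ℕ) + 1 : ℕ) : ℤ) (((a : ℕ) + 1 : ℕ) : ℤ))).card : ℝ) ≤ 2 * b := by
  set s1 := Finset.univ.filter (fun a : Fin K =>
    (((m : ℕ) : ℤ) - (a : ℕ)) % (K : ℤ) ∈ Finset.Icc (1 : ℤ) ⌊b⌋) with hs1
  set s2 := Finset.univ.filter (fun a : Fin K =>
    (((a : ℕ) : ℤ) - (m : ℕ)) % (K : ℤ) ∈ Finset.Icc (1 : ℤ) ⌊b⌋) with hs2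
  have hfl : 0 ≤ ⌊b⌋ := Int.floor_nonneg.2 hb
  have inj : ∀ a a' : Fin K, (K : ℤ) ∣ ((a : ℕ) : ℤ) - (a' : ℕ) → a = a' := by
    intro a a' h
    have h1 := a.2
    have h2 := a'.2
    have := Int.eq_zero_of_abs_lt_dvd h (by rw [abs_lt]; constructor <;> omega)
    apply Fin.ext
    omega
  have c1 : s1.card ≤ (Finset.Icc (1 : ℤ) ⌊b⌋).card := by
    apply Finset.card_le_card_of_injOn (fun a : Fin K => (((m : ℕ) : ℤ) - (a : ℕ)) % (K : ℤ))
    · intro a ha; exact (Finset.mem_filter.1 ha).2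
    · intro a _ a' _ h
      apply inj
      have h' := Int.ModEq.dvd (n := (K : ℤ)) h
      rwa [sub_sub_sub_cancel_left] at h'
  have c2 : s2.card ≤ (Finset.Icc (1 : ℤ) ⌊b⌋).card := by
    apply Finset.card_le_card_of_injOn (fun a : Fin K => (((a : ℕ) : ℤ) - (m : ℕ)) % (K : ℤ))
    · intro a ha; exact (Finset.mem_filter.1 ha).2
    · intro a _ a' _ h
      apply inj
      have h' := Int.ModEq.dvd (n := (K : ℤ)) h.symm
      rwa [sub_sub_sub_cancel_right] at h'
  have hsub : (Finset.univ.filter (fun a : Fin K =>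
      isNear K b (((m : ℕ) + 1 : ℕ) : ℤ) (((a : ℕ) + 1 : ℕ) : ℤ))) ⊆ s1 ∪ s2 := by
    intro a ha
    obtain ⟨h1, h2⟩ := (Finset.mem_filter.1 ha).2
    have e1 : ((((m : ℕ) + 1 : ℕ) : ℤ) - (((a : ℕ) + 1 : ℕ) : ℤ)) = ((m : ℕ) : ℤ) - (a : ℕ) := by
      push_cast; ring
    have e2 : ((((a : ℕ) + 1 : ℕ) : ℤ) - (((m : ℕ) + 1 : ℕ) : ℤ)) = ((a : ℕ) : ℤ) - (m : ℕ) := by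
      push_cast; ring
    unfold modDist at h1 h2
    rw [e1, e2] at h1 h2
    have h3 := Int.le_floor.2 h2
    rw [le_min_iff] at h1
    rw [min_le_iff] at h3
    simp only [hs1, hs2, Finset.mem_union, Finset.mem_filter, Finset.mem_univ, true_and,
      Finset.mem_Icc]
    tauto
  have h1 := Finset.card_le_card hsub
  have h2 := Finset.card_union_le s1 s2
  have h3 : ((Finset.Icc (1 : ℤ) ⌊b⌋).card : ℤ) = ⌊b⌋ := by
    rw [Int.card_Icc]; omega
  have h4 : ((Finset.univ.filter (fun a : Fin K =>
      isNear K b (((m : ℕ) + 1 : ℕ) : ℤ) (((a : ℕ) + 1 : ℕ) : ℤ))).card : ℤ) ≤ 2 * ⌊b⌋ := by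
    omega
  have h5 : ((Finset.univ.filter (fun a : Fin K =>
      isNear K b (((m : ℕ) + 1 : ℕ) : ℤ) (((a : ℕ) + 1 : ℕ) : ℤ))).card : ℝ) ≤ 2 * (⌊b⌋ : ℝ) := by
    exact_mod_cast h4
  have := Int.floor_le b
  linarith

def badS {K : ℕ} (c a : Fin K × Fin K) : Prop := c.1 = a.1 ∨ c.2 = a.2

def badR {K : ℕ} (b : ℝ) (c a : Fin K × Fin K) : Prop :=
  isNear K b (((c.1 : ℕ) + 1 : ℕ) : ℤ) (((a.1 : ℕ) + 1 : ℕ) : ℤ) ∨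
  isNear K b (((c.2 : ℕ) + 1 : ℕ) : ℤ) (((a.2 : ℕ) + 1 : ℕ) : ℤ)

lemma badS_card (K : ℕ) (hK : 0 < K) (c : Fin K × Fin K) :
    ((Finset.univ.filter (fun a => badS c a)).card : ℝ) ≤
      2 / K * Fintype.card (Fin K × Fin K) := by
  have hsub : (Finset.univ.filter (fun a => badS c a)) ⊆
      (({c.1} : Finset (Fin K)) ×ˢ (Finset.univ : Finset (Fin K))) ∪
      ((Finset.univ : Finset (Fin K)) ×ˢ ({c.2} : Finset (Fin K))) := by
    rintro ⟨a, b⟩ h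
    have := (Finset.mem_filter.1 h).2
    simp only [badS] at this
    simp only [Finset.mem_union, Finset.mem_product, Finset.mem_singleton, Finset.mem_univ,
      and_true, true_and]
    rcases this with h | h
    · exact Or.inl h.symm
    · exact Or.inr h.symm
  have h1 := (Finset.card_le_card hsub).trans (Finset.card_union_le _ _)
  simp only [Finset.card_product, Finset.card_singleton, Finset.card_univ, Fintype.card_fin,
    one_mul, mul_one] at h1
  have h2 : ((Finset.univ.filter (fun a => badS c a)).card : ℝ) ≤ K + K := by exact_mod_cast h1
  have hK' : (0 : ℝ) < K := by exact_mod_cast hK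
  rw [Fintype.card_prod, Fintype.card_fin]
  push_cast
  have : (2 : ℝ) / K * (K * K) = K + K := by field_simp; ring
  linarith

lemma badR_card (K : ℕ) (hK : 0 < K) (b : ℝ) (hb : 0 ≤ b) (hbK : 2 * b ≤ K)
    (c : Fin K × Fin K) :
    ((Finset.univ.filter (fun a => badR b c a)).card : ℝ) ≤
      (1 - (1 - 2 * b / K) ^ 2) * Fintype.card (Fin K × Fin K) := by
  have key : ∀ m : Fin K, (K : ℝ) - 2 * b ≤ ((Finset.univ.filter (fun a : Fin K =>
      ¬ isNear K b (((m : ℕ) + 1 : ℕ) : ℤ) (((a : ℕ) + 1 : ℕ) : ℤ))).card : ℝ) := by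
    intro m
    have h1 := near_card K b hb m
    have h2 := Finset.card_filter_add_card_filter_not (s := (Finset.univ : Finset (Fin K)))
      (fun a : Fin K => isNear K b (((m : ℕ) + 1 : ℕ) : ℤ) (((a : ℕ) + 1 : ℕ) : ℤ))
    rw [Finset.card_univ, Fintype.card_fin] at h2
    have h3 : (((Finset.univ.filter (fun a : Fin K =>
      isNear K b (((m : ℕ) + 1 : ℕ) : ℤ) (((a : ℕ) + 1 : ℕ) : ℤ))).card : ℕ) : ℝ) +
      ((Finset.univ.filter (fun a : Fin K =>
      ¬ isNear K b (((m : ℕ) + 1 : ℕ) : ℤ) (((a : ℕ) + 1 : ℕ) : ℤ))).card : ℝ) = K := by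
      exact_mod_cast h2
    linarith
  have h4 := Finset.card_filter_add_card_filter_not
    (s := (Finset.univ : Finset (Fin K × Fin K))) (fun a => badR b c a)
  have h5 : (Finset.univ.filter (fun a : Fin K × Fin K => ¬ badR b c a)) =
      (Finset.univ.filter (fun a : Fin K =>
        ¬ isNear K b (((c.1 : ℕ) + 1 : ℕ) : ℤ) (((a : ℕ) + 1 : ℕ) : ℤ))) ×ˢ
      (Finset.univ.filter (fun a : Fin K =>
        ¬ isNear K b (((c.2 : ℕ) + 1 : ℕ) : ℤ) (((a : ℕ) + 1 : ℕ) : ℤ))) := by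
    ext ⟨x, y⟩
    simp only [badR, Finset.mem_filter, Finset.mem_univ, true_and, Finset.mem_product, not_or]
  rw [h5, Finset.card_product, Finset.card_univ] at h4
  have h6 := mul_le_mul (key c.1) (key c.2) (by linarith) (by positivity)
  have hK' : (0 : ℝ) < K := by exact_mod_cast hK
  have h7 : (1 - (1 - 2 * b / K) ^ 2) * Fintype.card (Fin K × Fin K) =
      Fintype.card (Fin K × Fin K) - (K - 2 * b) * (K - 2 * b) := by
    rw [Fintype.card_prod, Fintype.card_fin]
    push_cast
    field_simp
  rw [h7, ← h4]
  push_cast at h6 ⊢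
  linarith

end colours
section numerics

lemma exp_le_num (n : ℕ) (x : ℝ) (hx : x ≤ -(n : ℝ)) : Real.exp x ≤ 1 / (2.7 : ℝ) ^ n := by
  have h1 : Real.exp x ≤ Real.exp (-(n : ℝ)) := Real.exp_le_exp.2 hx
  have h2 : (2.7 : ℝ) ^ n ≤ Real.exp n := by
    have h3 : Real.exp (n : ℝ) = Real.exp 1 ^ n := by rw [← Real.exp_nat_mul, mul_one]
    rw [h3]
    apply pow_le_pow_left₀ (by norm_num)
    have := Real.exp_one_gt_d9
    linarith
  refine h1.trans ?_
  rw [Real.exp_neg, ← one_div]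
  exact one_div_le_one_div_of_le (by positivity) h2

lemma poly_exp (x A B : ℝ) (k n : ℕ) (hx : 54000 ≤ x)
    (hB : (k : ℝ) / 50000 ≤ B) (hAB : A - B * 54000 ≤ -(n : ℝ)) :
    (x + 1) ^ k * Real.exp (A - B * x) ≤ 54001 ^ k * (1 / (2.7 : ℝ) ^ n) := by
  have h1 : x + 1 ≤ 54001 * Real.exp ((x - 54000) / 50000) := by
    have := Real.add_one_le_exp ((x - 54000) / 50000)
    have h3 : x + 1 ≤ 54001 * ((x - 54000) / 50000 + 1) := by linarith
    linarith
  have h2 : (x + 1) ^ k ≤ 54001 ^ k * Real.exp (k * ((x - 54000) / 50000)) := by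
    rw [Real.exp_nat_mul, ← mul_pow]
    exact pow_le_pow_left₀ (by linarith) h1 k
  have h3 : Real.exp (k * ((x - 54000) / 50000)) * Real.exp (A - B * x) ≤ 1 / (2.7 : ℝ) ^ n := by
    rw [← Real.exp_add]
    apply exp_le_num
    have := mul_le_mul_of_nonneg_right hB (by linarith : (0 : ℝ) ≤ x - 54000)
    linarith
  calc (x + 1) ^ k * Real.exp (A - B * x)
      ≤ (54001 ^ k * Real.exp (k * ((x - 54000) / 50000))) * Real.exp (A - B * x) :=
        mul_le_mul_of_nonneg_right h2 (Real.exp_pos _).le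
    _ = 54001 ^ k * (Real.exp (k * ((x - 54000) / 50000)) * Real.exp (A - B * x)) := by ring
    _ ≤ _ := mul_le_mul_of_nonneg_left h3 (by positivity)

noncomputable def pA (x : ℝ) : ℝ :=
  Real.exp (80 - Real.log 2 * 0.0031 * x) + Real.exp (0 - 0.0008 * x)
noncomputable def pU (x : ℝ) : ℝ := Real.exp (1200 - 0.0262 * x)

lemma pA_pos (x : ℝ) : 0 < pA x := by unfold pA; positivity
lemma pU_pos (x : ℝ) : 0 < pU x := by unfold pU; positivity

lemma numeric (x : ℝ) (hx : 54000 ≤ x) :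
    (x * (x + 1)) * ((x + 1) * pA x + (x * (x + 1)) * pU x) ≤ 1 / 4 := by
  have hl := Real.log_two_gt_d9
  have h1 := poly_exp x 80 (Real.log 2 * 0.0031) 3 36 hx (by norm_num; linarith)
    (by norm_num; linarith)
  have h2 := poly_exp x 0 0.0008 3 43 hx (by norm_num) (by norm_num)
  have h3 := poly_exp x 1200 0.0262 4 200 hx (by norm_num) (by norm_num)
  have h4 : (54001 : ℝ) ^ 3 * (1 / (2.7 : ℝ) ^ 36) + 54001 ^ 3 * (1 / (2.7 : ℝ) ^ 43) +
    54001 ^ 4 * (1 / (2.7 : ℝ) ^ 200) ≤ 1 / 4 := by norm_num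
  have hA := (pA_pos x).le
  have hU := (pU_pos x).le
  have h5 : x * (x + 1) ≤ (x + 1) ^ 2 := by nlinarith
  have h6 : (x * (x + 1)) * ((x + 1) * pA x + (x * (x + 1)) * pU x) ≤
      (x + 1) ^ 2 * ((x + 1) * pA x + (x + 1) ^ 2 * pU x) := by
    have : 0 ≤ x := by linarith
    gcongr
  have h7 : (x + 1) ^ 2 * ((x + 1) * pA x + (x + 1) ^ 2 * pU x) =
      (x + 1) ^ 3 * Real.exp (80 - Real.log 2 * 0.0031 * x) +
      (x + 1) ^ 3 * Real.exp (0 - 0.0008 * x) +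
      (x + 1) ^ 4 * Real.exp (1200 - 0.0262 * x) := by
    unfold pA pU; ring
  linarith

lemma one_add_pow_le (z y : ℝ) (d : ℕ) (hz : 0 ≤ 1 + z) (h : d * z ≤ y) :
    (1 + z) ^ d ≤ Real.exp y := by
  calc (1 + z) ^ d ≤ (Real.exp z) ^ d := by
        apply pow_le_pow_left₀ hz
        have := Real.add_one_le_exp z
        linarith
    _ = Real.exp (d * z) := by rw [Real.exp_nat_mul]
    _ ≤ _ := Real.exp_le_exp.2 h

lemma bound_S (d K : ℕ) (hd : (54000 : ℝ) ≤ d) (hK : (0.025 : ℝ) * d ≤ K) :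
    Real.exp (-(Real.log 2 * (0.0031 * d))) * (1 + 2 / K * (Real.exp (Real.log 2) - 1)) ^ d ≤
      Real.exp (80 - Real.log 2 * 0.0031 * d) := by
  have hK' : (0 : ℝ) < K := by linarith
  rw [Real.exp_log (by norm_num)]
  have h1 := one_add_pow_le (2 / K * (2 - 1)) 80 d (by norm_num; positivity) (by
    norm_num
    rw [← mul_div_assoc, div_le_iff₀ hK']
    linarith)
  calc _ ≤ Real.exp (-(Real.log 2 * (0.0031 * d))) * Real.exp 80 :=
        mul_le_mul_of_nonneg_left h1 (Real.exp_pos _).le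
    _ = _ := by rw [← Real.exp_add]; congr 1; ring

lemma bound_R (d K : ℕ) (hd : (54000 : ℝ) ≤ d) (hK : (0.025 : ℝ) * d ≤ K) (b : ℝ)
    (hb : b = (0.0031 * d + 7) / 2) :
    Real.exp (-(0.095 * (0.26 * d))) *
      (1 + (1 - (1 - 2 * b / K) ^ 2) * (Real.exp 0.095 - 1)) ^ d ≤
      Real.exp (0 - 0.0008 * d) := by
  have hK' : (0 : ℝ) < K := by linarith
  have hy : 2 * b / K ≤ 0.1292 := by
    rw [div_le_iff₀ hK', hb]
    linarith
  have hy0 : 0 ≤ 2 * b / K := by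
    have : 0 ≤ b := by rw [hb]; positivity
    positivity
  have he : Real.exp 0.095 ≤ 1.1 := by
    have := Real.exp_bound' (x := 0.095) (by norm_num) (by norm_num) (n := 4) (by norm_num)
    refine this.trans ?_
    norm_num [Finset.sum_range_succ, Nat.factorial]
  have he0 : 0 ≤ Real.exp 0.095 - 1 := by
    have := Real.add_one_le_exp (0.095 : ℝ)
    linarith
  set y := 2 * b / K
  have hm : 1 - (1 - y) ^ 2 ≤ 0.24171 := by nlinarith
  have hm0 : 0 ≤ 1 - (1 - y) ^ 2 := by nlinarith
  have h1 : 1 + (1 - (1 - y) ^ 2) * (Real.exp 0.095 - 1) ≤ Real.exp 0.0239 := by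
    have h2 := mul_le_mul hm (by linarith : Real.exp 0.095 - 1 ≤ 0.1) he0 (by norm_num)
    have h3 := Real.quadratic_le_exp_of_nonneg (x := 0.0239) (by norm_num)
    norm_num at h2 h3 ⊢
    linarith
  have h2 : (1 + (1 - (1 - y) ^ 2) * (Real.exp 0.095 - 1)) ^ d ≤ Real.exp (d * 0.0239) := by
    rw [Real.exp_nat_mul]
    exact pow_le_pow_left₀ (by positivity) h1 d
  calc _ ≤ Real.exp (-(0.095 * (0.26 * d))) * Real.exp (d * 0.0239) :=
        mul_le_mul_of_nonneg_left h2 (Real.exp_pos _).le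
    _ = _ := by rw [← Real.exp_add]; congr 1; ring

lemma bound_U (d : ℕ) (hd : (54000 : ℝ) ≤ d) :
    Real.exp (-(1 / 5 * (0.131 * d))) * (1 + 3 / 4 * (1600 / d)) ^ d ≤
      Real.exp (1200 - 0.0262 * d) := by
  have hd0 : (0 : ℝ) < d := by linarith
  have h1 := one_add_pow_le (3 / 4 * (1600 / d)) 1200 d (by positivity) (by
    apply le_of_eq
    field_simp
    norm_num)
  calc _ ≤ Real.exp (-(1 / 5 * (0.131 * d))) * Real.exp 1200 :=
        mul_le_mul_of_nonneg_left h1 (Real.exp_pos _).le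
    _ = _ := by rw [← Real.exp_add]; congr 1; ring

end numerics

section assembly
open Classical

/-- Coordinates on which the two kinds of events depend. -/
noncomputable def domain {V : Type*} [Fintype V] (G : SimpleGraph V) : V ⊕ V → Finset V
  | Sum.inl v => insert v (Finset.univ.filter (fun x => G.Adj v x))
  | Sum.inr v => (Finset.univ.filter (fun x => G.Adj v x)).biUnion
      (fun w => insert w (Finset.univ.filter (fun x => G.Adj w x)))

def badEvent {V : Type*} [Fintype V] (G : SimpleGraph V) (d K : ℕ) :
    V ⊕ V → (V → Fin K × Fin K) → Prop
  | Sum.inl v => fun C =>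
      (0.0031 * d : ℝ) ≤ (((Finset.univ.filter (fun w => G.Adj v w)).filter
        (fun w => badS (C v) (C w))).card : ℝ) ∨
      (0.26 * d : ℝ) ≤ (((Finset.univ.filter (fun w => G.Adj v w)).filter
        (fun w => badR ((0.0031 * d + 7) / 2) (C v) (C w))).card : ℝ)
  | Sum.inr v => fun C =>
      (0.131 * d : ℝ) ≤ (((Finset.univ.filter (fun w => G.Adj v w)).filter
        (fun w => ∃ x, G.Adj w x ∧ C x = C w)).card : ℝ)

noncomputable def prob {V : Type*} (d : ℕ) : V ⊕ V → ℝ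
  | Sum.inl _ => pA d
  | Sum.inr _ => pU d

lemma domain_card {V : Type*} [Fintype V] (G : SimpleGraph V) (d : ℕ) (hd : 1 ≤ d)
    (hdeg : ∀ w, (Finset.univ.filter (fun x => G.Adj w x)).card = d) (i : V ⊕ V) :
    (domain G i).card ≤ d * (d + 1) := by
  have h1 : ∀ w : V, (insert w (Finset.univ.filter (fun x => G.Adj w x))).card ≤ d + 1 := by
    intro w
    refine (Finset.card_insert_le _ _).trans ?_
    rw [hdeg]
  rcases i with v | v
  · refine (h1 v).trans ?_
    nlinarith
  · refine (Finset.card_biUnion_le_card_mul _ _ (d + 1) (fun w _ => h1 w)).trans ?_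
    rw [hdeg]

lemma codomain_sum {V : Type*} [Fintype V] (G : SimpleGraph V) (d : ℕ)
    (hdeg : ∀ w, (Finset.univ.filter (fun x => G.Adj w x)).card = d) (x : V) :
    ∑ j : V ⊕ V, (if x ∈ domain G j then prob d j else 0) ≤
      ((d : ℝ) + 1) * pA d + (d * ((d : ℝ) + 1)) * pU d := by
  rw [Fintype.sum_sum_type]
  have h1 : (insert x (Finset.univ.filter (fun y => G.Adj x y))).card ≤ d + 1 := by
    refine (Finset.card_insert_le _ _).trans ?_
    rw [hdeg]
  have c1 : (Finset.univ.filter (fun v => x ∈ domain G (Sum.inl v))).card ≤ d + 1 := by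
    refine le_trans (Finset.card_le_card ?_) h1
    intro v hv
    have := (Finset.mem_filter.1 hv).2
    simp only [domain, Finset.mem_insert, Finset.mem_filter, Finset.mem_univ, true_and] at this ⊢
    rcases this with h | h
    · exact Or.inl h.symm
    · exact Or.inr h.symm
  have c2 : (Finset.univ.filter (fun v => x ∈ domain G (Sum.inr v))).card ≤ d * (d + 1) := by
    have h2 := Finset.card_biUnion_le_card_mul
      (insert x (Finset.univ.filter (fun y => G.Adj x y)))
      (fun w => Finset.univ.filter (fun y => G.Adj w y)) d (fun w _ => (hdeg w).le)
    refine le_trans (Finset.card_le_card ?_) (h2.trans ?_)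
    · intro v hv
      have := (Finset.mem_filter.1 hv).2
      simp only [domain, Finset.mem_biUnion, Finset.mem_insert, Finset.mem_filter,
        Finset.mem_univ, true_and] at this ⊢
      obtain ⟨w, hw, h⟩ := this
      refine ⟨w, ?_, hw.symm⟩
      rcases h with h | h
      · exact Or.inl h.symm
      · exact Or.inr h.symm
    · rw [mul_comm]
      exact Nat.mul_le_mul_left _ h1
  rw [← Finset.sum_filter, ← Finset.sum_filter]
  simp only [prob, Finset.sum_const, nsmul_eq_mul]
  apply add_le_add
  · exact mul_le_mul_of_nonneg_right (by exact_mod_cast c1) (pA_pos _).le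
  · exact mul_le_mul_of_nonneg_right (by exact_mod_cast c2) (pU_pos _).le

lemma event_U {V : Type*} [Fintype V] (G : SimpleGraph V) (d : ℕ)
    (hdeg : ∀ w, (Finset.univ.filter (fun x => G.Adj w x)).card = d) (hd' : (54000 : ℝ) ≤ d)
    (K : ℕ) [NeZero K] (hK : (0.025 : ℝ) * d ≤ K) (v : V) :
    cnt (badEvent G d K (Sum.inr v)) ≤
      prob d (Sum.inr v : V ⊕ V) * cnt (fun _ : V → Fin K × Fin K => True) := by
  have hq : (d : ℝ) ≤ 1600 / d * Fintype.card (Fin K × Fin K) := by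
    rw [Fintype.card_prod, Fintype.card_fin]
    push_cast
    rw [div_mul_eq_mul_div, le_div_iff₀ (by linarith)]
    nlinarith
  have h := prob_U (α := Fin K × Fin K) G d hdeg (Finset.univ.filter (fun w => G.Adj v w))
    (hdeg v) (1600 / d) hq (0.131 * d)
  have h2 := mul_le_mul_of_nonneg_right (bound_U d hd')
    (cnt_nonneg (fun _ : V → Fin K × Fin K => True))
  refine le_trans (cnt_mono ?_) (h.trans h2)
  intro C hC
  simp only [badEvent] at hC
  convert hC

lemma exists_good {V : Type*} [Fintype V] (G : SimpleGraph V) (d : ℕ) (hd : 54000 ≤ d)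
    (hdeg : ∀ w, (Finset.univ.filter (fun x => G.Adj w x)).card = d)
    (K : ℕ) (hK : (0.025 : ℝ) * d ≤ K) :
    ∃ C : V → Fin K × Fin K, ∀ v,
      (((Finset.univ.filter (fun w => G.Adj v w)).filter
        (fun w => badS (C v) (C w))).card : ℝ) < 0.0031 * d ∧
      (((Finset.univ.filter (fun w => G.Adj v w)).filter
        (fun w => badR ((0.0031 * d + 7) / 2) (C v) (C w))).card : ℝ) < 0.26 * d ∧
      (((Finset.univ.filter (fun w => G.Adj v w)).filter
        (fun w => ∃ x, G.Adj w x ∧ C x = C w)).card : ℝ) < 0.131 * d := by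
  have hd' : (54000 : ℝ) ≤ d := by exact_mod_cast hd
  have hKpos' : (0 : ℝ) < K := by linarith
  have hKpos : 0 < K := by exact_mod_cast hKpos'
  haveI : NeZero K := ⟨hKpos.ne'⟩
  have hnum := numeric d hd'
  have hq0 : 0 ≤ ((d : ℝ) + 1) * pA d + (d * ((d : ℝ) + 1)) * pU d := by
    have := pA_pos d
    have := pU_pos d
    positivity
  have hprob0 : ∀ i : V ⊕ V, 0 ≤ prob d i := by
    rintro (v | v)
    · exact (pA_pos d).le
    · exact (pU_pos d).le
  suffices h : ∃ C, ∀ i, ¬ badEvent G d K i C by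
    obtain ⟨C, hC⟩ := h
    refine ⟨C, fun v => ?_⟩
    have h1 := hC (Sum.inl v)
    have h2 := hC (Sum.inr v)
    simp only [badEvent, not_or, not_le] at h1 h2
    exact ⟨h1.1, h1.2, h2⟩
  apply lll (domain G) (badEvent G d K) _ (prob d) hprob0
  · have hq4 : ((d : ℝ) + 1) * pA d + (d * ((d : ℝ) + 1)) * pU d ≤ 1 / 4 := by
      refine le_trans ?_ hnum
      apply le_mul_of_one_le_left hq0
      nlinarith
    have hA := (pA_pos d).le
    have hU := (pU_pos d).le
    have e1 : pA d ≤ ((d : ℝ) + 1) * pA d := le_mul_of_one_le_left hA (by linarith)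
    have e2 : pU d ≤ (d * ((d : ℝ) + 1)) * pU d := le_mul_of_one_le_left hU (by nlinarith)
    rintro (v | v)
    · change pA d ≤ _
      linarith
    · change pU d ≤ _
      linarith
  · rintro (v | v)
    · have hv : v ∉ Finset.univ.filter (fun w => G.Adj v w) := by simp
      refine cnt_or.trans ?_
      change _ ≤ pA d * _
      unfold pA
      rw [add_mul]
      apply add_le_add
      · refine (prob_indep v _ hv badS (Real.log 2) (Real.log_nonneg (by norm_num)) (2 / K)
          (by positivity) (badS_card K hKpos) (0.0031 * d)).trans ?_
        apply mul_le_mul_of_nonneg_right _ (cnt_nonneg _)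
        rw [hdeg]
        exact bound_S d K hd' hK
      · have hb0 : (0 : ℝ) ≤ (0.0031 * d + 7) / 2 := by positivity
        have hbK : 2 * ((0.0031 * (d : ℝ) + 7) / 2) ≤ K := by linarith
        have hle : 2 * ((0.0031 * (d : ℝ) + 7) / 2) / K ≤ 1 := (div_le_one hKpos').2 hbK
        have hge : 0 ≤ 2 * ((0.0031 * (d : ℝ) + 7) / 2) / K := by positivity
        refine (prob_indep v _ hv (badR ((0.0031 * d + 7) / 2)) 0.095 (by norm_num)
          (1 - (1 - 2 * ((0.0031 * d + 7) / 2) / K) ^ 2) ?_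
          (badR_card K hKpos _ hb0 hbK) (0.26 * d)).trans ?_
        · nlinarith
        · apply mul_le_mul_of_nonneg_right _ (cnt_nonneg _)
          rw [hdeg]
          exact bound_R d K hd' hK _ rfl
    · exact event_U G d hdeg hd' K hK v
  · intro i
    have h1 : ∑ j ∈ Finset.univ.filter (fun j => ¬ Disjoint (domain G i) (domain G j)), prob d j ≤
        ∑ j, ∑ x ∈ domain G i, (if x ∈ domain G j then prob d j else 0) := by
      rw [Finset.sum_filter]
      apply Finset.sum_le_sum
      intro j _
      have hnn : ∀ x ∈ domain G i, 0 ≤ (if x ∈ domain G j then prob d j else 0) := by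
        intro x _
        split_ifs
        · exact hprob0 j
        · exact le_rfl
      by_cases h : ¬ Disjoint (domain G i) (domain G j)
      · rw [if_pos h]
        obtain ⟨x, hx, hx'⟩ := Finset.not_disjoint_iff.1 h
        refine le_trans ?_ (Finset.single_le_sum hnn hx)
        rw [if_pos hx']
      · rw [if_neg h]
        exact Finset.sum_nonneg hnn
    rw [Finset.sum_comm] at h1
    refine h1.trans ?_
    refine (Finset.sum_le_sum (fun x _ => codomain_sum G d hdeg x)).trans ?_
    rw [Finset.sum_const, nsmul_eq_mul]
    refine le_trans (mul_le_mul_of_nonneg_right ?_ hq0) hnum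
    exact_mod_cast domain_card G d (by omega) hdeg i
  · rintro (v | v) C C' hCC h
    · have hv : C v = C' v := hCC v (by simp [domain])
      have hw : ∀ w ∈ Finset.univ.filter (fun w => G.Adj v w), C w = C' w := by
        intro w hw
        exact hCC w (Finset.mem_insert_of_mem hw)
      have e1 : ∀ bad : Fin K × Fin K → Fin K × Fin K → Prop,
          (Finset.univ.filter (fun w => G.Adj v w)).filter (fun w => bad (C v) (C w)) =
          (Finset.univ.filter (fun w => G.Adj v w)).filter (fun w => bad (C' v) (C' w)) := by
        intro bad
        apply Finset.filter_congr
        intro w hw'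
        rw [hv, hw w hw']
      simp only [badEvent] at h ⊢
      rwa [e1 badS, e1 (badR ((0.0031 * d + 7) / 2))] at h
    · have e1 : (Finset.univ.filter (fun w => G.Adj v w)).filter
            (fun w => ∃ x, G.Adj w x ∧ C x = C w) =
          (Finset.univ.filter (fun w => G.Adj v w)).filter
            (fun w => ∃ x, G.Adj w x ∧ C' x = C' w) := by
        apply Finset.filter_congr
        intro w hw
        have hw1 : C w = C' w := hCC w (Finset.mem_biUnion.2 ⟨w, hw, by simp⟩)
        apply exists_congr
        intro x
        apply and_congr_right
        intro hx
        have hx1 : C x = C' x := hCC x (Finset.mem_biUnion.2 ⟨w, hw, by simp [hx]⟩)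
        rw [hw1, hx1]
      simp only [badEvent] at h ⊢
      rwa [e1] at h

end assembly

/-- For a `d`-regular graph with `d ≥ 54000`, `k = 0.025`, `s = 0.0031`, `r = 0.26`,
`u = 0.131` and `K = ⌈kd⌉, there is an assignment of colours `C_v = (O_v, I_v) ∈ [K]²`
such that every vertex `v` satisfies `d_S(v) < sd`, `d_R(v) < rd` and `d_U(v) < ud`. -/
theorem good_colour_assignment_exists
    {V : Type*} [Fintype V] (G : SimpleGraph V) [DecidableRel G.Adj]
    (d : ℕ) (hd : 54000 ≤ d) (hreg : G.IsRegularOfDegree d) :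
    ∃ C : V → ℕ × ℕ,
      (∀ v : V, C v ∈ Finset.Icc 1 (⌈(0.025 : ℝ) * d⌉₊) ×ˢ
        Finset.Icc 1 (⌈(0.025 : ℝ) * d⌉₊)) ∧
      ∀ v : V,
        (edgeDeg (specialSet G C) v : ℝ) < 0.0031 * d ∧
        (edgeDeg (riskySet G C (⌈(0.025 : ℝ) * d⌉₊) ((0.0031 * d + 7) / 2)) v : ℝ)
          < 0.26 * d ∧
        ((G.neighborSet v ∩ uncolSet G C).ncard : ℝ) < 0.131 * d := by
  classical
  set K : ℕ := ⌈(0.025 : ℝ) * d⌉₊ with hKdef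
  set b : ℝ := (0.0031 * d + 7) / 2 with hbdef
  have hd' : (54000 : ℝ) ≤ d := by exact_mod_cast hd
  have hKd : (0.025 : ℝ) * d ≤ K := Nat.le_ceil _
  obtain ⟨C, hC⟩ := exists_good G d hd (fun w => by
    have h := hreg w
    rw [← G.card_neighborFinset_eq_degree] at h
    rw [← h]
    congr 1
    ext x
    simp) K hKd
  refine ⟨fun v => ((C v).1 + 1, (C v).2 + 1), ?_, ?_⟩
  · intro v
    have h1 := (C v).1.2
    have h2 := (C v).2.2
    simp only [Finset.mem_product, Finset.mem_Icc]
    omega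
  · intro v
    obtain ⟨h1, h2, h3⟩ := hC v
    refine ⟨lt_of_le_of_lt (Nat.cast_le.2 ?_) h1, lt_of_le_of_lt (Nat.cast_le.2 ?_) h2,
      lt_of_le_of_lt (Nat.cast_le.2 ?_) h3⟩
    · refine edgeDeg_le G _ (fun e he => he.1.1) (fun a b => badS (C a) (C b)) ?_ ?_ v
      · rintro x y (h | h)
        · exact Or.inl h.symm
        · exact Or.inr h.symm
      · rintro e ⟨_, x, y, he, h⟩
        refine ⟨x, y, he, ?_⟩
        rcases h with h | h
        · exact Or.inl (Fin.ext (Nat.succ_injective h))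
        · exact Or.inr (Fin.ext (Nat.succ_injective h))
    · refine edgeDeg_le G _ (fun e he => he.1.1) (fun x y => badR b (C x) (C y)) ?_ ?_ v
      · rintro x y (h | h)
        · exact Or.inl (isNear_symm h)
        · exact Or.inr (isNear_symm h)
      · rintro e ⟨_, x, y, he, h⟩
        exact ⟨x, y, he, h⟩
    · rw [← Set.ncard_coe_finset]
      refine Set.ncard_le_ncard ?_ (Set.toFinite _)
      rintro w ⟨hw, x, hx, hxw⟩
      simp only [Prod.mk.injEq, add_left_inj] at hxw
      simp only [Finset.coe_filter, Finset.mem_filter, Finset.mem_univ, true_and, Set.mem_ofPred_eq]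
      exact ⟨hw, x, hx, Prod.ext (Fin.ext hxw.1) (Fin.ext hxw.2)⟩
end
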